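/- Let S = k[x_0,…,x_n, y_0,…,y_m] be a bigraded polynomial ring with deg(x_i) = (1,0) and deg(y_j) = (0,1), let I = (f_1,…,f_{n+m}) be generated by n+m bihomogeneous forms with deg(f_i) = (d_i, e_i), and let V be the scheme in P^n × P^m defined by I. If V is a complete intersection (i.e. codim(V) = n+m), then deg(V) = Σ d_{i_1}⋯d_{i_n}·e_{j_1}⋯e_{j_m}, the sum being over all partitions of {1,…,n+m} into sets {i_1 < ⋯ < i_n} and {j_1 < ⋯ < j_m}. In particular, if d_i = d and e_i = e for all i, then deg(V) = C(n+m, n)·d^n·e^m. -/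

import Mathlib

open MvPolynomial Pointwise

noncomputable section

/-- The bigraded polynomial ring `S = k[x_0,…,x_n,y_0,…,y_m]`. -/
abbrev PolyS (k : Type) [Field k] (n m : ℕ) := MvPolynomial (Fin (n+1) ⊕ Fin (m+1)) k

/-- The bigrading weights: `deg x_i = (1,0)`, `deg y_j = (0,1)`. -/
def wt (n m : ℕ) : (Fin (n+1) ⊕ Fin (m+1)) → ℤ × ℤ :=
  Sum.elim (fun _ => (1,0)) (fun _ => (0,1))

/-- The bigraded piece of `S` in bidegree `γ`. -/
def grad (k : Type) [Field k] (n m : ℕ) (γ : ℤ × ℤ) : Submodule k (PolyS k n m) :=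
  weightedHomogeneousSubmodule k (wt n m) γ

/-- `B₁ = (x_0,…,x_n)`. -/
def Bone (k : Type) [Field k] (n m : ℕ) : Ideal (PolyS k n m) :=
  Ideal.span (Set.range fun i => X (Sum.inl i))

/-- `B₂ = (y_0,…,y_m)`. -/
def Btwo (k : Type) [Field k] (n m : ℕ) : Ideal (PolyS k n m) :=
  Ideal.span (Set.range fun j => X (Sum.inr j))

/-- `B = B₁ ⬝ B₂`, the irrelevant ideal of `ℙⁿ × ℙᵐ`. -/
def Birr (k : Type) [Field k] (n m : ℕ) : Ideal (PolyS k n m) := Bone k n m * Btwo k n m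

/-- The saturation `I : C^∞` of an ideal. -/
def satIdeal {k : Type} [Field k] {n m : ℕ} (I C : Ideal (PolyS k n m)) :
    Ideal (PolyS k n m) :=
  ⨆ t : ℕ, Submodule.colon I (C ^ t)

/-- The bidegree-`γ` piece of `S ⧸ I`, as a `k`-subspace. -/
def quotPiece (k : Type) [Field k] (n m : ℕ) (I : Ideal (PolyS k n m)) (γ : ℤ × ℤ) :
    Submodule k ((PolyS k n m) ⧸ I) :=
  (grad k n m γ).map (Ideal.Quotient.mkₐ k I).toLinearMap

/-- The bigraded Hilbert function of `S ⧸ I`. -/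
def HFq (k : Type) [Field k] (n m : ℕ) (I : Ideal (PolyS k n m)) (γ : ℤ × ℤ) : ℕ :=
  Module.finrank k (quotPiece k n m I γ)

/-- The bigraded Hilbert function of the subscheme of `ℙⁿ × ℙᵐ` defined by `I`, i.e. the
Hilbert function of `S ⧸ (I : B^∞)`. -/
def HFV (k : Type) [Field k] (n m : ℕ) (I : Ideal (PolyS k n m)) (γ : ℤ × ℤ) : ℕ :=
  HFq k n m (satIdeal I (Birr k n m)) γ

/-- `codim V = r`, encoded as: the cone over `V` (i.e. `Spec` of `S` modulo the saturation
of `I`) has Krull dimension `n + m + 2 - r`. -/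
def CodimEq (k : Type) [Field k] (n m : ℕ) (I : Ideal (PolyS k n m)) (r : ℕ) : Prop :=
  ringKrullDim ((PolyS k n m) ⧸ satIdeal I (Birr k n m)) = ((n + m + 2 - r : ℕ) : WithBot ℕ∞)

/-!
Since the cone over `V` has dimension at most two, the classes of a variable `s` and of `x_i`, `y_j`
modulo the saturation of `I` are algebraically dependent over `k`. A bihomogeneous component of a
relation among them yields a binary form in `s` and the one of `x_i`, `y_j` of the same degree as
`s`, which is monic in `s` and lies in `I` after multiplication by a power of `x_i y_j`. The
`n + m` forms obtained from the variables `s` other than `x_i` and `y_j` are a regular sequence in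
`S`, so the Koszul complex on `f_1, …, f_{n+m}` becomes exact in positive homological degrees once
`x_i y_j` is inverted. As this holds for all `i` and `j`, its strands of large bidegree are exact,
and the Hilbert function of `V` in large bidegrees is obtained from that of `S` by applying
`∏ (1 - x ^ d_i y ^ e_i)`, where `x` and `y` are the shifts by `(1, 0)` and `(0, 1)`.

Each factor `1 - x ^ d y ^ e` is `(1 - x) (1 + ⋯ + x ^ (d - 1))` plus
`(1 - y) x ^ d (1 + ⋯ + y ^ (e - 1))`. When the product is expanded, `(1 - x) ^ i (1 - y) ^ j` is
an iterated difference which kills the Hilbert polynomial of `S`, of bidegree `(n, m)`, unless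
`i = n` and `j = m`. In that case it gives the constant `1`, on which the remaining factor acts
through its value at `x = y = 1`, a product of `n` of the `d_i` and the complementary `e_i`.
-/

section Dimension

theorem ringKrullDim_le_of_isIntegral_of_injective {A R : Type*} [CommRing A] [CommRing R]
    [Algebra A R] [Algebra.IsIntegral A R] (hinj : Function.Injective (algebraMap A R)) :
    ringKrullDim A ≤ ringKrullDim R := by
  refine iSup_le fun l => ?_
  have hker : RingHom.ker (algebraMap A R) ≤ l.head.asIdeal := by
    rw [(RingHom.injective_iff_ker_eq_bot _).1 hinj]
    exact bot_le
  obtain ⟨Q, -, hQ, hQl⟩ := Ideal.exists_ideal_over_prime_of_isIntegral l.head.asIdeal ⊥ hker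
  have : Q.LiesOver l.head.asIdeal := ⟨hQl.symm⟩
  obtain ⟨L, hL, -⟩ := Ideal.exists_ltSeries_of_hasGoingUp l Q
  exact hL ▸ le_iSup (fun p : LTSeries (PrimeSpectrum R) => (p.length : WithBot ℕ∞)) L

variable {k R ι : Type*} [Field k] [CommRing R] [Algebra k R] [Algebra.FiniteType k R] [Fintype ι]
  {v : ι → R}

theorem card_le_ringKrullDim_of_algebraicIndependent_of_isDomain [IsDomain R]
    (hv : AlgebraicIndependent k v) : (Fintype.card ι : WithBot ℕ∞) ≤ ringKrullDim R := by
  obtain ⟨s, g, hg, hint⟩ := exists_integral_inj_algHom_of_fg k R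
  algebraize [g.toRingHom]
  have : IsScalarTower k (MvPolynomial (Fin s) k) R := .of_algebraMap_eq' g.comp_algebraMap.symm
  have : FaithfulSMul (MvPolynomial (Fin s) k) R := (faithfulSMul_iff_algebraMap_injective _ _).2 hg
  have hdim : (s : WithBot ℕ∞) ≤ ringKrullDim R := by
    simpa [MvPolynomial.ringKrullDim_of_isNoetherianRing] using
      ringKrullDim_le_of_isIntegral_of_injective (A := MvPolynomial (Fin s) k) (R := R) hg
  have htrdeg : Algebra.trdeg k R = s := by
    have := lift_trdeg_add_eq k (MvPolynomial (Fin s) k) R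
    rw [trdeg_eq_zero (R := MvPolynomial (Fin s) k), MvPolynomial.trdeg_of_isDomain] at this
    simpa [Cardinal.lift_eq_nat_iff, eq_comm] using this
  have hcard : Fintype.card ι ≤ s := by
    simpa [htrdeg] using hv.lift_cardinalMk_le_trdeg
  exact le_trans (by exact_mod_cast hcard) hdim

theorem card_le_ringKrullDim_of_algebraicIndependent (hv : AlgebraicIndependent k v) :
    (Fintype.card ι : WithBot ℕ∞) ≤ ringKrullDim R := by
  obtain ⟨p, hp, hcomap⟩ := Ideal.exists_comap_eq_of_mem_minimalPrimes_of_injective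
    (f := (aeval v : MvPolynomial ι k →ₐ[k] R).toRingHom) hv ⊥ (by
      rw [IsDomain.minimalPrimes_eq_singleton_bot]; rfl)
  have hker (q : MvPolynomial ι k) (hq : aeval v q ∈ p) : q = 0 := by
    rw [← Ideal.mem_bot, ← hcomap]
    exact hq
  have hquot : AlgebraicIndependent k fun i => Ideal.Quotient.mkₐ k p (v i) := by
    refine algebraicIndependent_iff.2 fun q hq => hker q ?_
    rw [← Ideal.Quotient.eq_zero_iff_mem, ← Ideal.Quotient.mkₐ_eq_mk k, ← hq, comp_aeval_apply]
  exact (card_le_ringKrullDim_of_algebraicIndependent_of_isDomain hquot).trans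
    (ringKrullDim_quotient_le p)

end Dimension

section Koszul

/-- The index set of the standard basis `e_T`, `T ⊆ {0, …, r - 1}`, of the Koszul complex on `r`
elements. It is built recursively: `Sum.inl T` is a set without the first element, `Sum.inr T`
a set containing it. -/
def KoszulIndex : ℕ → Type
  | 0 => Unit
  | r + 1 => KoszulIndex r ⊕ KoszulIndex r

namespace KoszulIndex

instance instFintype : (r : ℕ) → Fintype (KoszulIndex r)
  | 0 => inferInstanceAs (Fintype Unit)
  | r + 1 => letI := instFintype r; inferInstanceAs (Fintype (KoszulIndex r ⊕ KoszulIndex r))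

instance instDecidableEq : (r : ℕ) → DecidableEq (KoszulIndex r)
  | 0 => inferInstanceAs (DecidableEq Unit)
  | r + 1 =>
    letI := instDecidableEq r; inferInstanceAs (DecidableEq (KoszulIndex r ⊕ KoszulIndex r))

/-- The index of the basis vector of the Koszul complex in homological degree zero. -/
def empty : (r : ℕ) → KoszulIndex r
  | 0 => ()
  | r + 1 => Sum.inl (empty r)

/-- The cardinality of the index set `T`, i.e. the homological degree of `e_T`. -/
def card : {r : ℕ} → KoszulIndex r → ℕ
  | 0, _ => 0
  | _ + 1, .inl T => card T
  | _ + 1, .inr T => card T + 1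

/-- The weight `∑_{i ∈ T} w i`, i.e. the internal degree of `e_T` when the `i`-th element of the
sequence has degree `w i`. -/
def weight {A : Type*} [AddCommMonoid A] : {r : ℕ} → (Fin r → A) → KoszulIndex r → A
  | 0, _, _ => 0
  | _ + 1, w, .inl T => weight (Fin.tail w) T
  | _ + 1, w, .inr T => weight (Fin.tail w) T + w 0

theorem card_le : {r : ℕ} → (T : KoszulIndex r) → T.card ≤ r
  | 0, _ => le_rfl
  | _ + 1, .inl T => T.card_le.trans (Nat.le_succ _)
  | _ + 1, .inr T => Nat.succ_le_succ T.card_le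

theorem card_empty : (r : ℕ) → (empty r).card = 0
  | 0 => rfl
  | r + 1 => card_empty r

theorem eq_empty_of_card_eq_zero : {r : ℕ} → {T : KoszulIndex r} → T.card = 0 → T = empty r
  | 0, _, _ => rfl
  | _ + 1, .inl _, h => congrArg Sum.inl (eq_empty_of_card_eq_zero h)
  | _ + 1, .inr _, h => absurd h (Nat.succ_ne_zero _)

theorem weight_empty {A : Type*} [AddCommMonoid A] :
    {r : ℕ} → (w : Fin r → A) → weight w (empty r) = 0
  | 0, _ => rfl
  | _ + 1, w => weight_empty (Fin.tail w)

theorem sum_succ {A : Type*} [AddCommMonoid A] {r : ℕ} (g : KoszulIndex (r + 1) → A) :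
    ∑ T, g T = ∑ T : KoszulIndex r, g (.inl T) + ∑ T : KoszulIndex r, g (.inr T) :=
  Fintype.sum_sum_type g

theorem sum_neg_one_pow_card_mul {A : Type*} [AddCommMonoid A] {R : Type*} [CommRing R]
    (φ : Multiplicative A →* R) {r : ℕ} (w : Fin r → A) :
    ∑ T : KoszulIndex r, (-1) ^ T.card * φ (.ofAdd (weight w T)) = ∏ i, (1 - φ (.ofAdd (w i))) := by
  induction r with
  | zero => exact (Fintype.sum_unique (ι := Unit) _).trans (by simp [weight, card])
  | succ r ih =>
    calc
      _ = ∑ T, (-1) ^ card T * φ (.ofAdd (weight (Fin.tail w) T)) +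
          ∑ T, (-1) ^ (card T + 1) * φ (.ofAdd (weight (Fin.tail w) T + w 0)) := sum_succ _
      _ = (1 - φ (.ofAdd (w 0))) * ∑ T, (-1) ^ card T * φ (.ofAdd (weight (Fin.tail w) T)) := by
        rw [← Finset.sum_add_distrib, Finset.mul_sum]
        refine Finset.sum_congr rfl fun T _ => ?_
        rw [ofAdd_add, map_mul]
        ring
      _ = _ := by rw [ih, Fin.prod_univ_succ]; rfl

end KoszulIndex

open KoszulIndex Matrix

variable {R : Type*} [CommRing R] {r : ℕ}

/-- The differential of the mapping cone of multiplication by `c` on a complex with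
differential `M`. -/
def coneMatrix {ι : Type*} [DecidableEq ι] (M : Matrix ι ι R) (c : R) : Matrix (ι ⊕ ι) (ι ⊕ ι) R :=
  fromBlocks M (c • 1) 0 (-M)

section Cone

variable {ι : Type*} [Fintype ι] [DecidableEq ι] {M : Matrix ι ι R}

theorem coneMatrix_mul_self (hM : M * M = 0) (c : R) : coneMatrix M c * coneMatrix M c = 0 := by
  simp [coneMatrix, fromBlocks_multiply, hM]

theorem coneMatrix_homotopy {H : Matrix ι ι R} {g : R} (hH : M * H + H * M = g • 1) (a c : R) :
    coneMatrix M c * fromBlocks H 0 (a • 1) (-H) + fromBlocks H 0 (a • 1) (-H) * coneMatrix M c =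
      (a * c + g) • 1 := by
  rw [coneMatrix, fromBlocks_multiply, fromBlocks_multiply, fromBlocks_add, ← fromBlocks_one,
    fromBlocks_smul, add_smul, ← hH]
  congr 1
  · simp [smul_smul]
    abel
  · simp
  · simp
  · simp [smul_smul, mul_comm]
    abel

end Cone

/-- The differential `e_T ↦ ∑_{i ∈ T} ± f i • e_{T \ {i}}` of the Koszul complex on `f`, as a single
square matrix acting on the sum of all the terms. -/
def koszulMatrix : {r : ℕ} → (Fin r → R) → Matrix (KoszulIndex r) (KoszulIndex r) R
  | 0, _ => 0
  | _ + 1, f => coneMatrix (koszulMatrix (Fin.tail f)) (f 0)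

theorem koszulMatrix_mul_self : {r : ℕ} → (f : Fin r → R) → koszulMatrix f * koszulMatrix f = 0
  | 0, _ => Matrix.mul_zero _
  | _ + 1, f => coneMatrix_mul_self (koszulMatrix_mul_self (Fin.tail f)) (f 0)

theorem card_eq_succ_of_koszulMatrix_ne_zero {f : Fin r → R} {S T : KoszulIndex r}
    (h : koszulMatrix f S T ≠ 0) : T.card = S.card + 1 := by
  induction r with
  | zero => exact absurd rfl h
  | succ r ih =>
    rcases S with S | S <;> rcases T with T | T
    · exact ih h
    · obtain rfl : S = T := by
        contrapose! h
        exact (congrArg (f 0 * ·) (one_apply_ne (α := R) h)).trans (mul_zero _)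
      rfl
    · exact absurd rfl h
    · exact congrArg Nat.succ (ih (neg_ne_zero.1 h))

theorem koszulMatrix_mem_of_mem {A σ : Type*} [AddCommGroup A] [SetLike σ R]
    [AddSubgroupClass σ R] {𝒜 : A → σ} {w : Fin r → A} {f : Fin r → R}
    (hf : ∀ i, f i ∈ 𝒜 (w i)) (S T : KoszulIndex r) :
    koszulMatrix f S T ∈ 𝒜 (weight w T - weight w S) := by
  induction r with
  | zero => exact zero_mem _
  | succ r ih =>
    have hrec := ih (f := Fin.tail f) (w := Fin.tail w) fun i => hf i.succ
    rcases S with S | S <;> rcases T with T | T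
    · exact hrec S T
    · change f 0 * (1 : Matrix _ _ R) S T ∈ 𝒜 (weight (Fin.tail w) T + w 0 - weight (Fin.tail w) S)
      obtain rfl | hST := eq_or_ne S T
      · simpa using hf 0
      · simp [one_apply_ne hST]
    · exact zero_mem _
    · change -koszulMatrix (Fin.tail f) S T ∈
        𝒜 (weight (Fin.tail w) T + w 0 - (weight (Fin.tail w) S + w 0))
      simpa using hrec S T

theorem span_range_eq_sup (f : Fin (r + 1) → R) :
    Ideal.span (Set.range f) = Ideal.span {f 0} ⊔ Ideal.span (Set.range (Fin.tail f)) := by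
  rw [← Ideal.span_union, ← Set.insert_eq, ← Fin.range_cons, Fin.cons_self_tail]

theorem koszulMatrix_empty_mem_span (f : Fin r → R) (T : KoszulIndex r) :
    koszulMatrix f (empty r) T ∈ Ideal.span (Set.range f) := by
  induction r with
  | zero => exact zero_mem _
  | succ r ih =>
    rw [span_range_eq_sup]
    rcases T with T | T
    · exact Ideal.mem_sup_right (ih _ T)
    · exact Ideal.mem_sup_left (Ideal.mul_mem_right _ _ (Ideal.mem_span_singleton_self _))

theorem exists_koszul_homotopy {f : Fin r → R} {g : R} (hg : g ∈ Ideal.span (Set.range f)) :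
    ∃ H : Matrix (KoszulIndex r) (KoszulIndex r) R,
      koszulMatrix f * H + H * koszulMatrix f = g • 1 ∧
      ∀ S T, H S T ≠ 0 → S.card = T.card + 1 := by
  induction r generalizing g with
  | zero =>
    obtain rfl : g = 0 := by simpa [Set.range_eq_empty] using hg
    exact ⟨0, by simp, fun S T h => absurd rfl h⟩
  | succ r ih =>
    rw [span_range_eq_sup, Ideal.mem_span_singleton_sup] at hg
    obtain ⟨a, g', hg', rfl⟩ := hg
    obtain ⟨H, hH, hcard⟩ := ih hg'
    refine ⟨fromBlocks H 0 (a • 1) (-H), coneMatrix_homotopy hH a (f 0), ?_⟩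
    · rintro (S | S) (T | T) h
      · exact hcard S T h
      · exact absurd rfl h
      · obtain rfl : S = T := by
          contrapose! h
          exact (congrArg (a * ·) (one_apply_ne (α := R) h)).trans (mul_zero _)
        rfl
      · exact congrArg Nat.succ (hcard S T (neg_ne_zero.1 h))

end Koszul

section Acyclicity

open KoszulIndex Matrix

variable {R : Type*} [CommRing R] {r : ℕ}

theorem mulVec_mem {ι : Type*} [Fintype ι] (A : Matrix ι ι R) {x : ι → R} {Q : Ideal R}
    (hx : ∀ t, x t ∈ Q) (t : ι) : (A *ᵥ x) t ∈ Q :=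
  Ideal.map_pi Q x hx A.mulVecLin t

theorem koszulMatrix_mulVec_homotopy {f : Fin r → R} {g : R}
    {H : Matrix (KoszulIndex r) (KoszulIndex r) R}
    (hH : koszulMatrix f * H + H * koszulMatrix f = g • 1) (a : KoszulIndex r → R) :
    koszulMatrix f *ᵥ (H *ᵥ a) = g • a - H *ᵥ (koszulMatrix f *ᵥ a) := by
  rw [eq_sub_iff_add_eq, mulVec_mulVec, mulVec_mulVec, ← add_mulVec, hH, smul_mulVec, one_mulVec]

/-- Exactness, in homological degrees at least `i`, of the Koszul complex on `f` with coefficients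
in `R ⧸ Q` after inverting `u`. -/
def KoszulExactFrom (f : Fin r → R) (u : R) (Q : Ideal R) (i : ℕ) : Prop :=
  ∀ a : KoszulIndex r → R, (∀ T, T.card < i → a T = 0) → (∀ T, (koszulMatrix f *ᵥ a) T ∈ Q) →
    ∃ (N : ℕ) (b : KoszulIndex r → R), ∀ T, (u ^ N • a - koszulMatrix f *ᵥ b) T ∈ Q

variable {f : Fin r → R} {u : R}

theorem KoszulExactFrom.of_lt (Q : Ideal R) {i : ℕ} (hi : r < i) : KoszulExactFrom f u Q i :=
  fun a ha _ => ⟨0, 0, fun T => by simp [ha T (T.card_le.trans_lt hi)]⟩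

theorem KoszulExactFrom.of_regular {Q : Ideal R} {p : R} (hreg : ∀ x, p * x ∈ Q → x ∈ Q)
    (hp : ∃ N : ℕ, u ^ N * p ∈ Ideal.span (Set.range f)) {i : ℕ}
    (hex : KoszulExactFrom f u (Q ⊔ Ideal.span {p}) (i + 1)) : KoszulExactFrom f u Q i := by
  intro a ha hMa
  obtain ⟨N₁, hN₁⟩ := hp
  obtain ⟨H, hH, hcard⟩ := exists_koszul_homotopy hN₁
  -- As `H` is a null-homotopy of `u ^ N₁ * p`, the cycle `a` modulo `Q` is sent by `H` to a cycle
  -- modulo `Q + (p)` one degree higher; bounding the latter bounds `a` after dividing by `p`.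
  have hMH := koszulMatrix_mulVec_homotopy hH a
  have hsupp (T : KoszulIndex r) (hT : T.card < i + 1) : (H *ᵥ a) T = 0 := by
    refine Finset.sum_eq_zero fun S _ => ?_
    by_cases hTS : H T S = 0
    · exact mul_eq_zero_of_left hTS _
    · exact mul_eq_zero_of_right _ (ha S (by have := hcard T S hTS; omega))
  have hcycle (T : KoszulIndex r) :
      (koszulMatrix f *ᵥ (H *ᵥ a)) T ∈ Q ⊔ Ideal.span {p} := by
    rw [hMH]
    exact sub_mem (Ideal.mem_sup_right (Ideal.mul_mem_right _ _
        (Ideal.mul_mem_left _ _ (Ideal.mem_span_singleton_self p))))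
      (Ideal.mem_sup_left (mulVec_mem H hMa T))
  obtain ⟨N₂, c, hc⟩ := hex _ hsupp hcycle
  simp_rw [sup_comm Q, Ideal.mem_span_singleton_sup] at hc
  choose b q hq hbq using hc
  refine ⟨N₂ + N₁, b, fun T => hreg _ ?_⟩
  have hHa : u ^ N₂ • H *ᵥ a = koszulMatrix f *ᵥ c + (p • b + q) := by
    rw [← sub_eq_iff_eq_add']
    exact funext fun T => by simp [← hbq T, mul_comm]
  have hMHa := congrArg (koszulMatrix f *ᵥ ·) hHa
  simp only [mulVec_smul, hMH, mulVec_add, mulVec_mulVec c, koszulMatrix_mul_self,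
    zero_mulVec, zero_add] at hMHa
  have hkey : p * (u ^ (N₂ + N₁) • a - koszulMatrix f *ᵥ b) T =
      u ^ N₂ * (H *ᵥ (koszulMatrix f *ᵥ a)) T + (koszulMatrix f *ᵥ q) T := by
    have := congrFun hMHa T
    simp only [Pi.sub_apply, Pi.smul_apply, Pi.add_apply, smul_eq_mul] at this ⊢
    rw [pow_add]
    linear_combination this
  rw [hkey]
  exact add_mem (Ideal.mul_mem_left _ _ (mulVec_mem H hMa T)) (mulVec_mem _ hq T)

open RingTheory.Sequence in
theorem KoszulExactFrom.of_isWeaklyRegular {l : List R} (hl : IsWeaklyRegular R l)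
    (hu : ∀ p ∈ l, ∃ N : ℕ, u ^ N * p ∈ Ideal.span (Set.range f)) {j : ℕ} (hj : j ≤ l.length)
    {i : ℕ} (hi : r < i + (l.length - j)) : KoszulExactFrom f u (Ideal.ofList (l.take j)) i := by
  induction hj using Nat.decreasingInduction generalizing i with
  | self => exact .of_lt _ (by simpa using hi)
  | of_succ j hj ih =>
    refine .of_regular (p := l[j]) (fun x hx => ?_) (hu _ (List.getElem_mem hj)) ?_
    · have := hl.regular_mod_prev j hj
      rw [isSMulRegular_quotient_iff_mem_of_smul_mem] at this
      simpa using this x (by simpa using hx)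
    · rw [← Ideal.ofList_singleton, ← Ideal.ofList_append, List.take_append_getElem]
      exact ih (by omega)

theorem koszulMatrix_mulVec_single_empty (f : Fin r → R) :
    koszulMatrix f *ᵥ Pi.single (empty r) 1 = 0 := by
  funext S
  rw [mulVec_single_one, col_apply, Pi.zero_apply]
  by_contra hS
  exact Nat.succ_ne_zero _ ((card_eq_succ_of_koszulMatrix_ne_zero hS).symm.trans (card_empty r))

theorem exists_koszulMatrix_mulVec_eq_single_empty {f : Fin r → R} {g : R}
    (hg : g ∈ Ideal.span (Set.range f)) :
    ∃ b, koszulMatrix f *ᵥ b = Pi.single (empty r) g := by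
  obtain ⟨H, hH, -⟩ := exists_koszul_homotopy hg
  refine ⟨H *ᵥ Pi.single (empty r) 1, ?_⟩
  rw [koszulMatrix_mulVec_homotopy hH, koszulMatrix_mulVec_single_empty, mulVec_zero, sub_zero,
    ← Pi.single_smul, smul_eq_mul, mul_one]

theorem KoszulExactFrom.exists_pow_smul_eq_mulVec (hex : KoszulExactFrom f u ⊥ 1)
    {a : KoszulIndex r → R} (ha : koszulMatrix f *ᵥ a = 0) {N : ℕ}
    (hN : u ^ N * a (empty r) ∈ Ideal.span (Set.range f)) :
    ∃ (N : ℕ) (b : KoszulIndex r → R), u ^ N • a = koszulMatrix f *ᵥ b := by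
  obtain ⟨b₀, hb₀⟩ := exists_koszulMatrix_mulVec_eq_single_empty hN
  have hcycle : koszulMatrix f *ᵥ (u ^ N • a - koszulMatrix f *ᵥ b₀) = 0 := by
    rw [mulVec_sub, mulVec_smul, ha, mulVec_mulVec, koszulMatrix_mul_self, zero_mulVec, smul_zero,
      sub_zero]
  have hempty (T : KoszulIndex r) (hT : T.card < 1) :
      (u ^ N • a - koszulMatrix f *ᵥ b₀) T = 0 := by
    obtain rfl := eq_empty_of_card_eq_zero (Nat.lt_one_iff.1 hT)
    simp [hb₀]
  obtain ⟨N₁, b₁, hb₁⟩ := hex _ hempty (fun T => by simp [hcycle])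
  refine ⟨N₁ + N, b₁ + u ^ N₁ • b₀, ?_⟩
  have hb₁ : u ^ N₁ • (u ^ N • a - koszulMatrix f *ᵥ b₀) = koszulMatrix f *ᵥ b₁ :=
    funext fun T => by simpa [sub_eq_zero] using hb₁ T
  rw [mulVec_add, mulVec_smul, ← hb₁, smul_sub, smul_smul, ← pow_add, sub_add_cancel]

end Acyclicity

section MonicSequence

theorem mem_map_C_iff_map_mk_eq_zero {A : Type*} [CommRing A] {Q : Ideal A} {q : Polynomial A} :
    q ∈ Q.map (Polynomial.C : A →+* Polynomial A) ↔ q.map (Ideal.Quotient.mk Q) = 0 := by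
  simp [Ideal.mem_map_C_iff, Polynomial.ext_iff, Ideal.Quotient.eq_zero_iff_mem]

theorem mem_map_C_of_monic_mul_mem {A : Type*} [CommRing A] {Q : Ideal A} {p q : Polynomial A}
    (hp : p.Monic) (h : p * q ∈ Q.map (Polynomial.C : A →+* Polynomial A)) :
    q ∈ Q.map (Polynomial.C : A →+* Polynomial A) := by
  rw [mem_map_C_iff_map_mk_eq_zero] at h ⊢
  rw [Polynomial.map_mul] at h
  exact (hp.map _).mul_right_eq_zero_iff.1 h

theorem mem_of_mul_mem_of_monic {A : Type*} [CommRing A] (θ : A →+* Polynomial A) {x : A}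
    (hθ : ∀ a, (θ a).eval x = a) {Q : Ideal A} (hQ : Q.map θ ≤ Q.map Polynomial.C) {p : A}
    (hp : (θ p).Monic) {a : A} (h : p * a ∈ Q) : a ∈ Q := by
  have hmul : θ p * θ a ∈ Q.map Polynomial.C := by
    rw [← map_mul]
    exact hQ (Ideal.mem_map_of_mem θ h)
  have heval := Ideal.mem_map_of_mem (Polynomial.evalRingHom x) (mem_map_C_of_monic_mul_mem hp hmul)
  have hid : (Polynomial.evalRingHom x).comp Polynomial.C = RingHom.id A :=
    RingHom.ext fun _ => Polynomial.eval_C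
  rwa [Ideal.map_map, hid, Ideal.map_id, Polynomial.coe_evalRingHom, hθ] at heval

variable {σ τ R : Type*} [CommRing R]

open Classical in
/-- The expansion of a polynomial in powers of the variable `X s`, with coefficients the
polynomials not involving `X s`, seen in the same ring. -/
def expandIn (s : σ) : MvPolynomial σ R →ₐ[R] Polynomial (MvPolynomial σ R) :=
  aeval (Function.update (fun t => Polynomial.C (X t)) s Polynomial.X)

theorem eval_expandIn (s : σ) (p : MvPolynomial σ R) : (expandIn s p).eval (X s) = p := by
  have hid : ((Polynomial.aeval (X s : MvPolynomial σ R)).restrictScalars R).comp (expandIn s) =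
      AlgHom.id R _ := by
    ext t
    obtain rfl | ht := eq_or_ne t s <;> simp [expandIn, *]
  simpa [Polynomial.aeval_def, Polynomial.eval₂_eq_eval_map] using DFunLike.congr_fun hid p

theorem expandIn_rename_of_notMem_range {s : σ} {g : τ → σ} (hs : s ∉ Set.range g)
    (q : MvPolynomial τ R) : expandIn s (rename g q) = Polynomial.C (rename g q) := by
  have hcomp : (expandIn s).comp (rename g) =
      (IsScalarTower.toAlgHom R (MvPolynomial σ R) (Polynomial (MvPolynomial σ R))).comp
        (rename g) := by
    ext t
    have ht : g t ≠ s := fun h => hs ⟨t, h⟩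
    simp [expandIn, ht]
  exact DFunLike.congr_fun hcomp q

theorem coeff_aeval_homogenize {A : Type*} [CommRing A] [Algebra R A] (p : Polynomial R) (y : A)
    (N i : ℕ) : (aeval ![Polynomial.X, Polynomial.C y] (p.homogenize N)).coeff i =
      if i ≤ N then algebraMap R A (p.coeff i) * y ^ (N - i) else 0 := by
  induction p using Polynomial.induction_on' with
  | add p q hp hq => simp [hp, hq, add_mul, ite_add_ite]
  | monomial j c =>
    obtain hj | hj := le_or_gt j N
    · have hterm : aeval ![Polynomial.X, Polynomial.C y] ((Polynomial.monomial j c).homogenize N) =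
          Polynomial.monomial j (algebraMap R A c * y ^ (N - j)) := by
        rw [Polynomial.homogenize_monomial hj, aeval_monomial, Finsupp.prod_fintype _ _ (by simp),
          ← Polynomial.C_mul_X_pow_eq_monomial]
        simp [Fin.prod_univ_two, Polynomial.algebraMap_apply]
        ring
      rw [hterm, Polynomial.coeff_monomial, Polynomial.coeff_monomial]
      split_ifs <;> grind
    · rw [Polynomial.homogenize_monomial_of_lt hj, Polynomial.coeff_monomial]
      split_ifs <;> first | omega | simp

theorem monic_aeval_homogenize {A : Type*} [CommRing A] [Algebra R A] {p : Polynomial R}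
    (hp : p.Monic) (y : A) :
    (aeval ![Polynomial.X, Polynomial.C y] (p.homogenize p.natDegree)).Monic := by
  refine Polynomial.monic_of_natDegree_le_of_coeff_eq_one p.natDegree ?_ ?_
  · refine Polynomial.natDegree_le_iff_coeff_eq_zero.2 fun i hi => ?_
    rw [coeff_aeval_homogenize, if_neg hi.not_ge]
  · rw [coeff_aeval_homogenize, if_pos le_rfl, hp.coeff_natDegree]
    simp

theorem monic_expandIn_rename_homogenize {s v : σ} (hv : v ≠ s) {p : Polynomial R}
    (hp : p.Monic) : (expandIn s (rename ![s, v] (p.homogenize p.natDegree))).Monic := by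
  have hX : (expandIn s).comp (rename (R := R) ![s, v]) =
      aeval ![Polynomial.X, Polynomial.C (X v)] := by
    ext1 i
    fin_cases i <;> simp [expandIn, hv]
  rw [← AlgHom.comp_apply, hX]
  exact monic_aeval_homogenize hp (X v)

open RingTheory.Sequence in
theorem isWeaklyRegular_map_of_monic_expandIn {P : σ → MvPolynomial σ R} {l : List σ}
    (hl : l.Nodup) (hmonic : ∀ s ∈ l, (expandIn s (P s)).Monic)
    (hconst : ∀ s ∈ l, ∀ t ∈ l, t ≠ s → expandIn s (P t) = Polynomial.C (P t)) :
    IsWeaklyRegular (MvPolynomial σ R) (l.map P) := by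
  refine ⟨fun i hi => ?_⟩
  have hil : i < l.length := by simpa using hi
  rw [isSMulRegular_quotient_iff_mem_of_smul_mem]
  intro a ha
  simp only [List.getElem_map, smul_eq_mul, Ideal.mul_top] at ha ⊢
  refine mem_of_mul_mem_of_monic (expandIn l[i]).toRingHom (eval_expandIn l[i]) ?_
    (hmonic _ (List.getElem_mem hil)) ha
  rw [Ideal.map_ofList]
  refine Ideal.span_le.2 fun q hq => ?_
  simp only [List.map_take, List.map_map, Set.mem_ofPred_eq, List.mem_take_iff_getElem,
    List.length_map, List.getElem_map, Function.comp_apply] at hq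
  obtain ⟨j, hj, rfl⟩ := hq
  have hne : l[j] ≠ l[i] := fun h => by
    have := (hl.getElem_inj_iff).1 h
    omega
  change expandIn l[i] (P l[j]) ∈ _
  rw [hconst _ (List.getElem_mem _) _ (List.getElem_mem _) hne]
  refine Ideal.mem_map_of_mem _ (Ideal.subset_span ?_)
  simp only [Set.mem_ofPred_eq, List.mem_take_iff_getElem]
  exact ⟨j, by simpa using hj, by simp⟩

end MonicSequence

section WeightedComponents

variable {σ τ R M : Type*} [CommRing R] [AddCommGroup M] {w : σ → M}

attribute [local instance] weightedGradedAlgebra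

theorem weightedHomogeneousComponent_mul_of_left_mem {δ : M} {g : MvPolynomial σ R}
    (hg : IsWeightedHomogeneous w g δ) (γ : M) (a : MvPolynomial σ R) :
    weightedHomogeneousComponent w (δ + γ) (g * a) =
      g * weightedHomogeneousComponent w γ a := by
  classical
  simp only [← weightedDecomposition.decompose'_apply R w]
  exact DirectSum.coe_decompose_mul_add_of_left_mem (weightedHomogeneousSubmodule R w) (b := a) hg

theorem weightedHomogeneousComponent_mem_span_range {ι : Type*} {f : ι → MvPolynomial σ R}
    {δ : ι → M} (hf : ∀ i, IsWeightedHomogeneous w (f i) (δ i)) {a : MvPolynomial σ R}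
    (ha : a ∈ Ideal.span (Set.range f)) (γ : M) :
    weightedHomogeneousComponent w γ a ∈ Ideal.span (Set.range f) := by
  classical
  refine weightedHomogeneousComponent_mem_of_mem R w (Ideal.homogeneous_span _ _ ?_) ha γ
  rintro _ ⟨i, rfl⟩
  exact ⟨δ i, hf i⟩

theorem weightedHomogeneousComponent_rename (g : τ → σ) (γ : M) (p : MvPolynomial τ R) :
    weightedHomogeneousComponent w γ (rename g p) =
      rename g (weightedHomogeneousComponent (w ∘ g) γ p) := by
  classical
  induction p using MvPolynomial.induction_on' with
  | add p q hp hq => simp only [map_add, hp, hq]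
  | monomial u c =>
    have hu : Finsupp.weight w (u.mapDomain g) = Finsupp.weight (w ∘ g) u := by
      simp [Finsupp.weight_apply, Finsupp.sum_mapDomain_index, add_smul]
    rw [rename_monomial,
      weightedHomogeneousComponent_of_mem (isWeightedHomogeneous_monomial w _ _ hu),
      weightedHomogeneousComponent_of_mem (isWeightedHomogeneous_monomial (w ∘ g) u c rfl)]
    split_ifs
    · rw [rename_monomial]
    · rw [map_zero]

theorem exists_weightedHomogeneousComponent_ne_zero {p : MvPolynomial σ R} (hp : p ≠ 0) :
    ∃ γ, weightedHomogeneousComponent w γ p ≠ 0 := by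
  by_contra! h
  exact hp (by rw [← sum_weightedHomogeneousComponent w p]; simp [h])

open Matrix

variable {ι κ : Type*}

/-- The projection of the graded free module with basis elements in the degrees `v i` onto its
part of degree `γ`. -/
def freeComponent (w : σ → M) (v : ι → M) (γ : M) :
    (ι → MvPolynomial σ R) →ₗ[R] (ι → MvPolynomial σ R) :=
  LinearMap.pi fun i => weightedHomogeneousComponent w (γ - v i) ∘ₗ LinearMap.proj i

theorem freeComponent_apply (w : σ → M) (v : ι → M) (γ : M) (a : ι → MvPolynomial σ R) (i : ι) :
    freeComponent w v γ a i = weightedHomogeneousComponent w (γ - v i) (a i) :=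
  rfl

theorem freeComponent_mulVec [Fintype κ] {u : ι → M} {v : κ → M}
    {A : Matrix ι κ (MvPolynomial σ R)} (hA : ∀ i j, IsWeightedHomogeneous w (A i j) (v j - u i))
    (γ : M) (a : κ → MvPolynomial σ R) :
    freeComponent w u γ (A *ᵥ a) = A *ᵥ freeComponent w v γ a := by
  ext1 i
  simp only [freeComponent_apply, Matrix.mulVec, dotProduct, map_sum]
  refine Finset.sum_congr rfl fun j _ => ?_
  rw [← weightedHomogeneousComponent_mul_of_left_mem (hA i j)]
  congr 2
  abel

theorem isWeightedHomogeneous_freeComponent (w : σ → M) (v : ι → M) (γ : M)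
    (a : ι → MvPolynomial σ R) (i : ι) :
    IsWeightedHomogeneous w (freeComponent w v γ a i) (γ - v i) :=
  weightedHomogeneousComponent_isWeightedHomogeneous _ _

theorem freeComponent_eq_self {v : ι → M} {γ : M} {a : ι → MvPolynomial σ R}
    (ha : ∀ i, IsWeightedHomogeneous w (a i) (γ - v i)) : freeComponent w v γ a = a :=
  funext fun i => IsWeightedHomogeneous.weightedHomogeneousComponent_same (ha i)

theorem sum_freeComponent_of_support_subset {v : ι → M} {a : ι → MvPolynomial σ R} {F : Finset M}
    (hF : ∀ γ, freeComponent w v γ a ≠ 0 → γ ∈ F) : ∑ γ ∈ F, freeComponent w v γ a = a := by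
  ext1 i
  have hsupp : (Function.support fun γ => weightedHomogeneousComponent w (γ - v i) (a i)) ⊆ F :=
    fun γ hγ => hF γ fun h => hγ (congrFun h i)
  simp only [Finset.sum_apply, freeComponent_apply]
  rw [← finsum_eq_sum_of_support_subset _ hsupp]
  exact (finsum_comp_equiv (Equiv.subRight (v i))).trans
    (finsum_weightedHomogeneousComponent w (a i))

theorem finite_support_freeComponent [Finite ι] (v : ι → M) (a : ι → MvPolynomial σ R) :
    (Function.support fun γ => freeComponent w v γ a).Finite := by
  refine (Set.finite_iUnion fun i => ((weightedHomogeneousComponent_finsupp (w := w)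
    (a i)).image (· + v i))).subset fun γ hγ => ?_
  obtain ⟨i, hi⟩ := Function.ne_iff.1 hγ
  exact Set.mem_iUnion.2 ⟨i, γ - v i, hi, sub_add_cancel γ (v i)⟩

theorem exists_freeComponent_smul_eq_sum [Finite ι] (v : ι → M) (a : ι → MvPolynomial σ R) :
    ∃ F : Finset M, ∀ γ (c : MvPolynomial σ R), freeComponent w v γ (c • a) =
      ∑ γ₀ ∈ F, weightedHomogeneousComponent w (γ - γ₀) c • freeComponent w v γ₀ a := by
  have hfin := finite_support_freeComponent (w := w) v a
  refine ⟨hfin.toFinset, fun γ c => ?_⟩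
  have hsum : ∑ γ₀ ∈ hfin.toFinset, freeComponent w v γ₀ a = a :=
    sum_freeComponent_of_support_subset fun γ₀ h => hfin.mem_toFinset.2 h
  conv_lhs => rw [← hsum, Finset.smul_sum, map_sum]
  refine Finset.sum_congr rfl fun γ₀ _ => ?_
  ext1 i
  simp only [freeComponent_apply, Pi.smul_apply, smul_eq_mul]
  rw [mul_comm, mul_comm (weightedHomogeneousComponent w (γ - γ₀) c),
    ← weightedHomogeneousComponent_mul_of_left_mem
      (weightedHomogeneousComponent_isWeightedHomogeneous _ _)]
  congr 2
  abel

end WeightedComponents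

section BinaryForms

theorem exists_eq_rename_homogenize_mul_X_pow {R : Type*} [CommRing R]
    {G : MvPolynomial (Fin 3) R} {α β : ℕ}
    (hG : ∀ u ∈ G.support, u 0 + u 1 = α ∧ u 2 = β) :
    ∃ p : Polynomial R, p.natDegree ≤ α ∧ G = rename ![0, 1] (p.homogenize α) * X 2 ^ β := by
  refine ⟨∑ u ∈ G.support, Polynomial.monomial (u 0) (coeff u G), ?_, ?_⟩
  · refine Polynomial.natDegree_sum_le_of_forall_le _ _ fun u hu => ?_
    have := (hG u hu).1
    exact (Polynomial.natDegree_monomial_le _).trans (by omega)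
  · conv_lhs => rw [G.as_sum]
    rw [Polynomial.homogenize_finsetSum, map_sum, Finset.sum_mul]
    refine Finset.sum_congr rfl fun u hu => ?_
    obtain ⟨rfl, rfl⟩ := hG u hu
    rw [Polynomial.homogenize_monomial (by omega), rename_monomial, X_pow_eq_monomial,
      monomial_mul, mul_one]
    have hu' : u = (((Finsupp.single 0 (u 0)).update 1 (u 1)).mapDomain ![0, 1] +
        Finsupp.single 2 (u 2) : Fin 3 →₀ ℕ) := by
      ext t
      fin_cases t <;> simp [Finsupp.update_eq_add_single, Finsupp.mapDomain_add]
    rw [Nat.add_sub_cancel_left, ← hu']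

variable {k : Type*} [Field k]

theorem exists_monic_homogenize_dvd {p : Polynomial k} (hp : p ≠ 0) {α : ℕ}
    (hα : p.natDegree ≤ α) : ∃ q : Polynomial k, q.Monic ∧
      p.homogenize α ∣ q.homogenize q.natDegree * X 1 ^ (α - q.natDegree) := by
  refine ⟨p * Polynomial.C p.leadingCoeff⁻¹, Polynomial.monic_mul_leadingCoeff_inv hp, ?_⟩
  have hdeg := Polynomial.natDegree_mul_leadingCoeff_inv p hp
  rw [← Polynomial.homogenize_one, ← Polynomial.homogenize_mul _ _ le_rfl (by simp), mul_one, hdeg,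
    Nat.add_sub_of_le hα, mul_comm, Polynomial.homogenize_C_mul]
  exact dvd_mul_left _ _

variable {σ M : Type*} [AddCommGroup M] {w : σ → M} {J : Ideal (MvPolynomial σ k)}

theorem exists_homogeneous_relation
    (hJ : ∀ a ∈ J, ∀ γ, weightedHomogeneousComponent w γ a ∈ J)
    {τ : Type*} {g : τ → σ} (hg : ¬ AlgebraicIndependent k fun t => Ideal.Quotient.mk J (X (g t))) :
    ∃ (γ : M) (G : MvPolynomial τ k), G ≠ 0 ∧ IsWeightedHomogeneous (w ∘ g) G γ ∧
      rename g G ∈ J := by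
  rw [algebraicIndependent_iff] at hg
  push Not at hg
  obtain ⟨G, hG, hG0⟩ := hg
  obtain ⟨γ, hγ⟩ := exists_weightedHomogeneousComponent_ne_zero (w := w ∘ g) hG0
  refine ⟨γ, _, hγ, weightedHomogeneousComponent_isWeightedHomogeneous γ G, ?_⟩
  rw [← weightedHomogeneousComponent_rename]
  refine hJ _ ?_ γ
  rw [← Ideal.Quotient.eq_zero_iff_mem, ← Ideal.Quotient.mkₐ_eq_mk k, ← hG, rename_eq_aeval,
    comp_aeval_apply]
  rfl

theorem exists_monic_homogenize_mem [Finite σ]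
    (hJ : ∀ a ∈ J, ∀ γ, weightedHomogeneousComponent w γ a ∈ J)
    (hdim : ringKrullDim (MvPolynomial σ k ⧸ J) ≤ 2) {s v v' : σ} {ω ω' : M}
    (hs : w s = ω) (hv : w v = ω) (hv' : w v' = ω')
    (hω : ∀ a b a' b' : ℕ, a • ω + b • ω' = a' • ω + b' • ω' → a = a' ∧ b = b') :
    ∃ q : Polynomial k, q.Monic ∧
      ∃ N : ℕ, (X v * X v') ^ N * rename ![s, v] (q.homogenize q.natDegree) ∈ J := by
  obtain ⟨γ, G, hG0, hGγ, hGJ⟩ := exists_homogeneous_relation hJ (g := ![s, v, v']) fun h => by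
    have hcard := (card_le_ringKrullDim_of_algebraicIndependent h).trans hdim
    norm_num at hcard
  obtain ⟨α, β, hαβ⟩ : ∃ α β : ℕ, ∀ u ∈ G.support, u 0 + u 1 = α ∧ u 2 = β := by
    obtain ⟨u₀, hu₀⟩ := support_nonempty.2 hG0
    refine ⟨u₀ 0 + u₀ 1, u₀ 2, fun u hu => hω _ _ _ _ ?_⟩
    have hweight : ∀ u ∈ G.support, (u 0 + u 1) • ω + u 2 • ω' = γ := fun u hu => by
      rw [← hGγ (mem_support_iff.1 hu), Finsupp.weight_apply, Finsupp.sum_fintype _ _ (by simp)]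
      simp [Fin.sum_univ_three, hs, hv, hv', add_smul]
    rw [hweight u hu, hweight u₀ hu₀]
  obtain ⟨p, hpα, hp⟩ := exists_eq_rename_homogenize_mul_X_pow hαβ
  have hp0 : p ≠ 0 := by
    rintro rfl
    exact hG0 (by simp [hp])
  obtain ⟨q, hq, hpq⟩ := exists_monic_homogenize_dvd hp0 hpα
  refine ⟨q, hq, α - q.natDegree + β, J.mem_of_dvd ?_ hGJ⟩
  have hpq' := map_dvd (rename (R := k) ![s, v]) hpq
  have hfun : ![s, v, v'] ∘ ![0, 1] = ![s, v] := by
    ext t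
    fin_cases t <;> rfl
  rw [hp, map_mul, rename_rename, hfun, map_pow, rename_X]
  rw [map_mul, map_pow, rename_X] at hpq'
  refine (mul_dvd_mul hpq' (dvd_refl (X v' ^ β))).trans ⟨X v ^ β * X v' ^ (α - q.natDegree), ?_⟩
  simp
  ring

end BinaryForms

section Charts

variable {k : Type} [Field k] {n m : ℕ}

theorem mem_satIdeal_iff {I C : Ideal (PolyS k n m)} {a : PolyS k n m} :
    a ∈ satIdeal I C ↔ ∃ t : ℕ, C ^ t ≤ Submodule.colon I {a} := by
  have hcolon (t : ℕ) : Submodule.colon I ((C : Set (PolyS k n m)) ^ t) =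
      Submodule.colon I ((C ^ t : Ideal (PolyS k n m)) : Set (PolyS k n m)) := by
    rw [← Submodule.colon_span, ← Submodule.span_pow, Submodule.span_eq]
  have hmono : Monotone fun t : ℕ => Submodule.colon I ((C : Set (PolyS k n m)) ^ t) :=
    fun s t hst => by
      simpa only [hcolon] using Submodule.colon_mono le_rfl (Ideal.pow_le_pow_right hst)
  rw [satIdeal, Submodule.mem_iSup_of_directed _ hmono.directed_le]
  refine exists_congr fun t => ?_
  rw [hcolon, Submodule.mem_colon]
  refine forall₂_congr fun s _ => ?_
  rw [Submodule.mem_colon_singleton, smul_eq_mul, smul_eq_mul, mul_comm]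

/-- The monomial `x_i y_j`, whose non-vanishing locus is the `(i, j)`-th standard affine chart of
`ℙⁿ × ℙᵐ`. -/
def chartMonomial (k : Type) [Field k] {n m : ℕ} (i : Fin (n + 1)) (j : Fin (m + 1)) :
    PolyS k n m :=
  X (Sum.inl i) * X (Sum.inr j)

theorem Birr_eq_span_chartMonomial :
    Birr k n m = Ideal.span (Set.range fun ij : Fin (n + 1) × Fin (m + 1) =>
      chartMonomial k ij.1 ij.2) := by
  rw [Birr, Bone, Btwo, Ideal.span_mul_span', ← Set.image_mul_prod, Set.prod_range_range_eq,
    ← Set.range_comp]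
  rfl

theorem mem_satIdeal_Birr_iff {I : Ideal (PolyS k n m)} {a : PolyS k n m} :
    a ∈ satIdeal I (Birr k n m) ↔ ∀ i j, ∃ N : ℕ, chartMonomial k i j ^ N * a ∈ I := by
  have hrad : (∃ t : ℕ, Birr k n m ^ t ≤ Submodule.colon I {a}) ↔
      Birr k n m ≤ (Submodule.colon I {a}).radical := by
    refine ⟨fun ⟨t, ht⟩ x hx => ⟨t, ht (Ideal.pow_mem_pow hx t)⟩, fun h => ?_⟩
    exact Ideal.exists_pow_le_of_le_radical_of_fg h (IsNoetherian.noetherian _)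
  rw [mem_satIdeal_iff, hrad, Birr_eq_span_chartMonomial, Ideal.span_le, Set.range_subset_iff,
    Prod.forall]
  simp [Ideal.mem_radical_iff, Submodule.mem_colon_singleton]

theorem chartMonomial_mem_grad (i : Fin (n + 1)) (j : Fin (m + 1)) :
    chartMonomial k i j ∈ grad k n m (1, 1) :=
  (isWeightedHomogeneous_X k (wt n m) _).mul (isWeightedHomogeneous_X k (wt n m) _)

theorem weightedHomogeneousComponent_mem_satIdeal {I : Ideal (PolyS k n m)}
    (hI : ∀ a ∈ I, ∀ γ, weightedHomogeneousComponent (wt n m) γ a ∈ I) :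
    ∀ a ∈ satIdeal I (Birr k n m), ∀ γ,
      weightedHomogeneousComponent (wt n m) γ a ∈ satIdeal I (Birr k n m) := by
  intro a ha γ
  rw [mem_satIdeal_Birr_iff] at ha ⊢
  intro i j
  obtain ⟨N, hN⟩ := ha i j
  refine ⟨N, ?_⟩
  rw [← weightedHomogeneousComponent_mul_of_left_mem ((chartMonomial_mem_grad i j).pow N)]
  exact hI _ hN _

variable {f : Fin (n + m) → PolyS k n m} {δ : Fin (n + m) → ℤ × ℤ}

/-- The variable used to homogenize `X s` on the `(i, j)`-th standard chart: `x_i` for the `x`'s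
and `y_j` for the `y`'s. -/
def chartVar (i : Fin (n + 1)) (j : Fin (m + 1)) :
    Fin (n + 1) ⊕ Fin (m + 1) → Fin (n + 1) ⊕ Fin (m + 1) :=
  Sum.map (fun _ => i) (fun _ => j)

theorem exists_monic_chartMonomial_pow_mul_mem_span (hf : ∀ i, f i ∈ grad k n m (δ i))
    (hdim : ringKrullDim (PolyS k n m ⧸ satIdeal (Ideal.span (Set.range f)) (Birr k n m)) ≤ 2)
    (i : Fin (n + 1)) (j : Fin (m + 1)) (s : Fin (n + 1) ⊕ Fin (m + 1)) :
    ∃ q : Polynomial k, q.Monic ∧ ∃ N : ℕ, chartMonomial k i j ^ N *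
      rename ![s, chartVar i j s] (q.homogenize q.natDegree) ∈ Ideal.span (Set.range f) := by
  have hJ := weightedHomogeneousComponent_mem_satIdeal
    fun a ha γ => weightedHomogeneousComponent_mem_span_range hf ha γ
  suffices h : ∃ q : Polynomial k, q.Monic ∧ ∃ N : ℕ, chartMonomial k i j ^ N *
      rename ![s, chartVar i j s] (q.homogenize q.natDegree) ∈
        satIdeal (Ideal.span (Set.range f)) (Birr k n m) by
    obtain ⟨q, hq, N, hN⟩ := h
    obtain ⟨N', hN'⟩ := mem_satIdeal_Birr_iff.1 hN i j
    exact ⟨q, hq, N' + N, by rwa [pow_add, mul_assoc]⟩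
  rcases s with s | s
  · refine exists_monic_homogenize_mem hJ hdim (s := Sum.inl s) (v := Sum.inl i)
      (v' := Sum.inr j) (ω := (1, 0)) (ω' := (0, 1)) rfl rfl rfl fun a b a' b' h => ?_
    simpa [Prod.ext_iff] using h
  · rw [chartMonomial, mul_comm]
    refine exists_monic_homogenize_mem hJ hdim (s := Sum.inr s) (v := Sum.inr j)
      (v' := Sum.inl i) (ω := (0, 1)) (ω' := (1, 0)) rfl rfl rfl fun a b a' b' h => ?_
    simpa [Prod.ext_iff, and_comm] using h

theorem koszulExactFrom_chartMonomial (hf : ∀ i, f i ∈ grad k n m (δ i))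
    (hdim : ringKrullDim (PolyS k n m ⧸ satIdeal (Ideal.span (Set.range f)) (Birr k n m)) ≤ 2)
    (i : Fin (n + 1)) (j : Fin (m + 1)) : KoszulExactFrom f (chartMonomial k i j) ⊥ 1 := by
  choose q hq hqf using exists_monic_chartMonomial_pow_mul_mem_span hf hdim i j
  set P := fun s => rename ![s, chartVar i j s] ((q s).homogenize (q s).natDegree)
  set l := ((Finset.univ.erase (Sum.inl i)).erase (Sum.inr j) :
    Finset (Fin (n + 1) ⊕ Fin (m + 1))).toList
  have hlen : l.length = n + m := by
    rw [Finset.length_toList, Finset.card_erase_of_mem (by simp),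
      Finset.card_erase_of_mem (by simp)]
    simp
  have hne : ∀ s ∈ l, ∀ t, chartVar i j t ≠ s := by
    rintro s hs (t | t) rfl <;> simp [l, chartVar] at hs
  have hreg : RingTheory.Sequence.IsWeaklyRegular (PolyS k n m) (l.map P) := by
    refine isWeaklyRegular_map_of_monic_expandIn (Finset.nodup_toList _)
      (fun s hs => monic_expandIn_rename_homogenize (hne s hs s) (hq s)) fun s hs t _ hts => ?_
    refine expandIn_rename_of_notMem_range ?_ _
    rintro ⟨c, hc⟩
    fin_cases c
    exacts [hts hc, hne s hs t hc]
  have := KoszulExactFrom.of_isWeaklyRegular (f := f) (u := chartMonomial k i j) hreg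
    (fun p hp => ?_) (Nat.zero_le _) (i := 1) (by simp [hlen])
  · simpa using this
  · obtain ⟨s, -, rfl⟩ := List.mem_map.1 hp
    exact hqf s

end Charts

section LargeDegrees

open Filter

variable {k : Type} [Field k] {n m : ℕ}

theorem weight_wt (u : (Fin (n + 1) ⊕ Fin (m + 1)) →₀ ℕ) : Finsupp.weight (wt n m) u =
    (((∑ i, u (Sum.inl i) : ℕ) : ℤ), ((∑ j, u (Sum.inr j) : ℕ) : ℤ)) := by
  rw [Finsupp.weight_apply, Finsupp.sum_fintype _ _ (by simp), Fintype.sum_sum_type]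
  simp [wt, Prod.ext_iff, Prod.fst_sum, Prod.snd_sum]

theorem chartMonomial_pow_dvd_monomial {u : (Fin (n + 1) ⊕ Fin (m + 1)) →₀ ℕ} {i : Fin (n + 1)}
    {j : Fin (m + 1)} {N : ℕ} (hi : N ≤ u (Sum.inl i)) (hj : N ≤ u (Sum.inr j)) (c : k) :
    chartMonomial k i j ^ N ∣ monomial u c := by
  rw [chartMonomial, mul_pow, X_pow_eq_monomial, X_pow_eq_monomial, monomial_mul,
    monomial_dvd_monomial]
  refine ⟨Or.inr fun t => ?_, by simp⟩
  rcases t with t | t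
  · rcases eq_or_ne i t with rfl | h
    · simpa using hi
    · simp [h]
  · rcases eq_or_ne j t with rfl | h
    · simpa using hj
    · simp [h]

theorem mem_span_chartMonomial_pow {N : ℕ} {γ : ℤ × ℤ}
    (hγ : ((((n + 1) * N : ℕ) : ℤ), (((m + 1) * N : ℕ) : ℤ)) ≤ γ) {b : PolyS k n m}
    (hb : b ∈ grad k n m γ) :
    b ∈ Ideal.span (Set.range fun ij : Fin (n + 1) × Fin (m + 1) =>
      chartMonomial k ij.1 ij.2 ^ N) := by
  rw [b.as_sum]
  refine Ideal.sum_mem _ fun u hu => ?_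
  rw [← hb (mem_support_iff.1 hu), weight_wt, Prod.mk_le_mk, Nat.cast_le, Nat.cast_le] at hγ
  obtain ⟨i, -, hi⟩ := Finset.exists_le_of_sum_le (f := fun _ => N) (g := fun i => u (Sum.inl i))
    Finset.univ_nonempty (by simpa using hγ.1)
  obtain ⟨j, -, hj⟩ := Finset.exists_le_of_sum_le (f := fun _ => N) (g := fun j => u (Sum.inr j))
    Finset.univ_nonempty (by simpa using hγ.2)
  exact Ideal.mem_of_dvd _ (chartMonomial_pow_dvd_monomial hi hj _)
    (Ideal.subset_span ⟨(i, j), rfl⟩)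

theorem eventually_grad_subset {C : Ideal (PolyS k n m)}
    (hC : ∀ i j, ∃ N : ℕ, chartMonomial k i j ^ N ∈ C) :
    ∀ᶠ γ in atTop, (grad k n m γ : Set (PolyS k n m)) ⊆ C := by
  have hpow : ∀ᶠ N : ℕ in atTop, ∀ ij : Fin (n + 1) × Fin (m + 1),
      chartMonomial k ij.1 ij.2 ^ N ∈ C := by
    refine eventually_all.2 fun ij => ?_
    obtain ⟨N, hN⟩ := hC ij.1 ij.2
    filter_upwards [eventually_ge_atTop N] with N' h using C.pow_mem_of_pow_mem hN h
  obtain ⟨N, hN⟩ := hpow.exists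
  filter_upwards [eventually_ge_atTop ((((n + 1) * N : ℕ) : ℤ), (((m + 1) * N : ℕ) : ℤ))]
    with γ hγ b hb
  exact Ideal.span_le.2 (Set.range_subset_iff.2 hN) (mem_span_chartMonomial_pow hγ hb)

variable {ι : Type*} [Finite ι] {v : ι → ℤ × ℤ} {W W' : Submodule (PolyS k n m) (ι → PolyS k n m)}

theorem eventually_freeComponent_smul_mem {a : ι → PolyS k n m}
    (ha : ∀ γ i j, ∃ N : ℕ,
      (chartMonomial k i j : PolyS k n m) ^ N • freeComponent (wt n m) v γ a ∈ W') :
    ∀ᶠ γ in atTop, ∀ c : PolyS k n m, freeComponent (wt n m) v γ (c • a) ∈ W' := by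
  obtain ⟨F, hF⟩ := exists_freeComponent_smul_eq_sum (w := wt n m) v a
  have hlarge : ∀ᶠ γ in atTop, ∀ γ₀ ∈ F, ∀ c : PolyS k n m,
      weightedHomogeneousComponent (wt n m) (γ - γ₀) c • freeComponent (wt n m) v γ₀ a ∈ W' := by
    refine (F.eventually_all).2 fun γ₀ _ => ?_
    have hcolon := eventually_grad_subset
      (C := W'.comap (LinearMap.toSpanSingleton _ _ (freeComponent (wt n m) v γ₀ a))) (ha γ₀)
    have hshift : Tendsto (fun γ : ℤ × ℤ => γ - γ₀) atTop atTop := by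
      simpa only [sub_eq_add_neg, id] using tendsto_atTop_add_const_right atTop (-γ₀) tendsto_id
    filter_upwards [hshift.eventually hcolon] with γ hγ c
    exact hγ (weightedHomogeneousComponent_isWeightedHomogeneous (γ - γ₀) c)
  filter_upwards [hlarge] with γ hγ c
  rw [hF]
  exact W'.sum_mem fun γ₀ hγ₀ => hγ γ₀ hγ₀ c

theorem eventually_mem_of_chartMonomial_pow_smul_mem
    (hW : ∀ a ∈ W, ∀ γ, freeComponent (wt n m) v γ a ∈ W)
    (hloc : ∀ a ∈ W, ∀ i j, ∃ N : ℕ,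
      (chartMonomial k i j : PolyS k n m) ^ N • a ∈ W') :
    ∀ᶠ γ in atTop, ∀ a ∈ W, (∀ t, a t ∈ grad k n m (γ - v t)) → a ∈ W' := by
  obtain ⟨G, hG⟩ : W.FG := IsNoetherian.noetherian W
  have hgen : ∀ᶠ γ in atTop, ∀ g ∈ G, ∀ c : PolyS k n m,
      freeComponent (wt n m) v γ (c • g) ∈ W' := by
    refine (G.eventually_all).2 fun g hg => eventually_freeComponent_smul_mem fun γ i j => ?_
    exact hloc _ (hW g (hG ▸ Submodule.subset_span hg) γ) i j
  filter_upwards [hgen] with γ hγ a ha hgrad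
  rw [← hG] at ha
  obtain ⟨c, -, rfl⟩ := Submodule.mem_span_finset.1 ha
  rw [← freeComponent_eq_self hgrad, map_sum]
  exact W'.sum_mem fun g hg => hγ g hg (c g)

end LargeDegrees

section HilbertFunctionOfRing

variable {n m : ℕ}

theorem setOf_weight_wt_eq (a b : ℕ) :
    {u : (Fin (n + 1) ⊕ Fin (m + 1)) →₀ ℕ | Finsupp.weight (wt n m) u = ((a : ℤ), (b : ℤ))} =
      (((Finset.univ : Finset (Fin (n + 1))).finsuppAntidiag a ×ˢ
        (Finset.univ : Finset (Fin (m + 1))).finsuppAntidiag b).map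
          Finsupp.sumFinsuppEquivProdFinsupp.symm.toEmbedding : Finset _) := by
  ext u
  simp only [Set.mem_ofPred_eq, weight_wt, Prod.mk.injEq, Nat.cast_inj, Finset.coe_map,
    Equiv.coe_toEmbedding, Set.mem_image, Finset.mem_coe, Finset.mem_product,
    Finset.mem_finsuppAntidiag, Finset.subset_univ, and_true]
  constructor
  · exact fun h => ⟨Finsupp.sumFinsuppEquivProdFinsupp u, h, by simp⟩
  · rintro ⟨⟨p, q⟩, ⟨hp, hq⟩, rfl⟩
    exact ⟨by simpa using hp, by simpa using hq⟩

theorem finite_setOf_weight_wt_eq (γ : ℤ × ℤ) :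
    {u : (Fin (n + 1) ⊕ Fin (m + 1)) →₀ ℕ | Finsupp.weight (wt n m) u = γ}.Finite := by
  by_cases hγ : ∃ a b : ℕ, ((a : ℤ), (b : ℤ)) = γ
  · obtain ⟨a, b, rfl⟩ := hγ
    rw [setOf_weight_wt_eq]
    exact Finset.finite_toSet _
  · exact Set.finite_empty.subset fun u hu => hγ ⟨_, _, (weight_wt u).symm.trans hu⟩

/-- The coordinates on the piece of `S` of bidegree `γ` given by its basis of monomials. -/
def gradEquiv (k : Type) [Field k] (n m : ℕ) (γ : ℤ × ℤ) :
    grad k n m γ ≃ₗ[k]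
      ({u : (Fin (n + 1) ⊕ Fin (m + 1)) →₀ ℕ | Finsupp.weight (wt n m) u = γ} →₀ k) :=
  LinearEquiv.ofEq _ _ (weightedHomogeneousSubmodule_eq_finsupp_supported k (wt n m) γ) ≪≫ₗ
    AddMonoidAlgebra.supportedEquivFinsupp _

variable (k : Type) [Field k]

instance finite_grad (γ : ℤ × ℤ) : Module.Finite k (grad k n m γ) :=
  have := (finite_setOf_weight_wt_eq (n := n) (m := m) γ).to_subtype
  .equiv (gradEquiv k n m γ).symm

theorem finrank_grad (n m a b : ℕ) :
    Module.finrank k (grad k n m ((a : ℤ), (b : ℤ))) = (a + n).choose n * (b + m).choose m := by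
  rw [(gradEquiv k n m _).finrank_eq, setOf_weight_wt_eq, Module.finrank_finsupp_self]
  simp only [Finset.coe_sort_coe, Fintype.card_coe, Finset.card_map, Finset.card_product,
    Finset.card_finsuppAntidiag_nat_eq_choose, Finset.card_univ, Fintype.card_fin]
  congr 1
  · rw [Nat.add_right_comm, Nat.add_sub_cancel, add_comm, ← Nat.choose_symm_add]
  · rw [Nat.add_right_comm, Nat.add_sub_cancel, add_comm, ← Nat.choose_symm_add]

end HilbertFunctionOfRing

section EulerCharacteristic

variable {k E F : Type*} [Field k] [AddCommGroup E] [Module k E] [AddCommGroup F] [Module k F]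

theorem finrank_map_add_finrank_inf_ker (V : Submodule k E) [Module.Finite k V] (L : E →ₗ[k] F) :
    Module.finrank k (V.map L) + Module.finrank k (V ⊓ LinearMap.ker L : Submodule k E) =
      Module.finrank k V := by
  rw [← LinearMap.finrank_range_add_finrank_ker (L.domRestrict V), LinearMap.range_domRestrict,
    LinearMap.ker_domRestrict, ← Submodule.finrank_map_subtype_eq, Submodule.map_comap_subtype]

theorem finrank_eq_finrank_map_add_of_map_eq {V₀ V₁ : Submodule k E} [Module.Finite k V₀]
    [Module.Finite k V₁] {D : E →ₗ[k] E} {L : E →ₗ[k] F}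
    (h₀ : V₀.map D = V₁ ⊓ (LinearMap.ker D ⊓ LinearMap.ker L))
    (h₁ : V₁.map D = V₀ ⊓ (LinearMap.ker D ⊓ LinearMap.ker L)) (hL : V₁ ≤ LinearMap.ker L) :
    Module.finrank k V₀ =
      Module.finrank k ((V₀ ⊓ LinearMap.ker D).map L) + Module.finrank k V₁ := by
  have : Module.Finite k (V₀ ⊓ LinearMap.ker D : Submodule k E) :=
    Submodule.finiteDimensional_of_le inf_le_left
  rw [← finrank_map_add_finrank_inf_ker V₀ D, ← finrank_map_add_finrank_inf_ker V₁ D,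
    ← finrank_map_add_finrank_inf_ker (V₀ ⊓ LinearMap.ker D) L, h₀, h₁,
    inf_left_comm, inf_eq_left.2 hL, inf_assoc, inf_comm (LinearMap.ker D) V₁]
  ring

instance finite_ite (P : Prop) [Decidable P] (V W : Submodule k E) [Module.Finite k V]
    [Module.Finite k W] : Module.Finite k (if P then V else W : Submodule k E) :=
  iteInduction (motive := fun U : Submodule k E => Module.Finite k U) (fun _ => ‹_›) fun _ => ‹_›

variable {ι : Type*} (p : ι → Submodule k E)

/-- The product of the subspaces `p i`, as a subspace of a power of the ambient space. -/
def piUnivEquiv : Submodule.pi Set.univ p ≃ₗ[k] ∀ i, p i where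
  toFun a i := ⟨a.1 i, a.2 i trivial⟩
  invFun b := ⟨fun i => b i, fun i _ => (b i).2⟩
  map_add' _ _ := rfl
  map_smul' _ _ := rfl

instance finite_pi_univ [Finite ι] [∀ i, Module.Finite k (p i)] :
    Module.Finite k (Submodule.pi Set.univ p) :=
  .equiv (piUnivEquiv p).symm

theorem finrank_pi_univ [Fintype ι] [∀ i, Module.Finite k (p i)] :
    Module.finrank k (Submodule.pi Set.univ p) = ∑ i, Module.finrank k (p i) := by
  rw [(piUnivEquiv p).finrank_eq, Module.finrank_pi_fintype]

end EulerCharacteristic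

section KoszulStrands

open KoszulIndex Matrix

variable {k : Type} [Field k] {n m r : ℕ}

/-- The differential of the Koszul complex on `f`, as a `k`-linear endomorphism of the direct sum
of its terms. -/
def koszulDifferential (f : Fin r → PolyS k n m) :
    (KoszulIndex r → PolyS k n m) →ₗ[k] (KoszulIndex r → PolyS k n m) :=
  (koszulMatrix f).mulVecLin.restrictScalars k

/-- The augmentation of the Koszul complex: the component in homological degree `0`, modulo `J`. -/
def koszulAugmentation (r : ℕ) (J : Ideal (PolyS k n m)) :
    (KoszulIndex r → PolyS k n m) →ₗ[k] PolyS k n m ⧸ J :=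
  (Ideal.Quotient.mkₐ k J).toLinearMap ∘ₗ LinearMap.proj (empty r)

/-- The part of internal degree `γ` of the Koszul complex on forms of degrees `δ i`, restricted to
the homological degrees of parity `p`. -/
def koszulStrand (k : Type) [Field k] (n m : ℕ) (δ : Fin r → ℤ × ℤ) (γ : ℤ × ℤ) (p : ZMod 2) :
    Submodule k (KoszulIndex r → PolyS k n m) :=
  Submodule.pi Set.univ fun T => if (T.card : ZMod 2) = p then grad k n m (γ - weight δ T) else ⊥

theorem koszulDifferential_apply (f : Fin r → PolyS k n m) (a : KoszulIndex r → PolyS k n m) :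
    koszulDifferential f a = koszulMatrix f *ᵥ a :=
  rfl

theorem mem_ker_koszulAugmentation {J : Ideal (PolyS k n m)} {a : KoszulIndex r → PolyS k n m} :
    a ∈ LinearMap.ker (koszulAugmentation r J) ↔ a (empty r) ∈ J :=
  Ideal.Quotient.eq_zero_iff_mem

variable {f : Fin r → PolyS k n m} {δ : Fin r → ℤ × ℤ} {γ : ℤ × ℤ} {p : ZMod 2}
  {a : KoszulIndex r → PolyS k n m}

theorem mem_koszulStrand : a ∈ koszulStrand k n m δ γ p ↔
    (∀ T, a T ∈ grad k n m (γ - weight δ T)) ∧ ∀ T : KoszulIndex r, T.card ≠ p → a T = 0 := by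
  rw [koszulStrand, Submodule.mem_pi, ← forall_and]
  refine forall_congr' fun T => ?_
  by_cases hT : (T.card : ZMod 2) = p
  · simp [hT]
  · simpa [hT] using fun h : a T = 0 => h ▸ zero_mem _

instance finite_koszulStrand : Module.Finite k (koszulStrand k n m δ γ p) :=
  finite_pi_univ _

theorem finrank_koszulStrand : Module.finrank k (koszulStrand k n m δ γ p) =
    ∑ T : KoszulIndex r,
      if T.card = p then Module.finrank k (grad k n m (γ - weight δ T)) else 0 := by
  rw [koszulStrand, finrank_pi_univ]
  refine Finset.sum_congr rfl fun T _ => ?_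
  rw [apply_ite fun V : Submodule k (PolyS k n m) => Module.finrank k V, finrank_bot]

theorem finrank_koszulStrand_sub (δ : Fin r → ℤ × ℤ) (γ : ℤ × ℤ) :
    (Module.finrank k (koszulStrand k n m δ γ 0) -
        Module.finrank k (koszulStrand k n m δ γ 1) : ℤ) =
      ∑ T : KoszulIndex r,
        (-1) ^ T.card * (Module.finrank k (grad k n m (γ - weight δ T)) : ℤ) := by
  rw [finrank_koszulStrand, finrank_koszulStrand, Nat.cast_sum, Nat.cast_sum,
    ← Finset.sum_sub_distrib]
  refine Finset.sum_congr rfl fun T _ => ?_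
  simp only [ZMod.natCast_eq_zero_iff_even, ZMod.natCast_eq_one_iff_odd]
  rcases Nat.even_or_odd T.card with hT | hT
  · simp [hT, hT.neg_one_pow]
  · simp [hT, Nat.not_even_iff_odd.2 hT, hT.neg_one_pow]

theorem koszulMatrix_mulVec_indicator (f : Fin r → PolyS k n m) (p : ZMod 2)
    (a : KoszulIndex r → PolyS k n m) :
    koszulMatrix f *ᵥ {T | (T.card : ZMod 2) = p + 1}.indicator a =
      {T | (T.card : ZMod 2) = p}.indicator (koszulMatrix f *ᵥ a) := by
  classical
  have hparity {S T : KoszulIndex r} (h : koszulMatrix f S T ≠ 0) :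
      (T.card : ZMod 2) = p + 1 ↔ (S.card : ZMod 2) = p := by
    rw [card_eq_succ_of_koszulMatrix_ne_zero h, Nat.cast_succ, add_left_inj]
  ext1 S
  calc ∑ T, koszulMatrix f S T * {T | (T.card : ZMod 2) = p + 1}.indicator a T
    _ = ∑ T, koszulMatrix f S T * if (S.card : ZMod 2) = p then a T else 0 := by
      refine Finset.sum_congr rfl fun T _ => ?_
      rcases eq_or_ne (koszulMatrix f S T) 0 with h | h
      · rw [h, zero_mul, zero_mul]
      · simp only [Set.indicator_apply, Set.mem_ofPred_eq, hparity h]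
    _ = {T | (T.card : ZMod 2) = p}.indicator (koszulMatrix f *ᵥ a) S := by
      by_cases hS : (S.card : ZMod 2) = p <;> simp [hS, mulVec, dotProduct]

theorem freeComponent_koszulMatrix_mulVec (hf : ∀ i, f i ∈ grad k n m (δ i)) (γ : ℤ × ℤ)
    (a : KoszulIndex r → PolyS k n m) :
    freeComponent (wt n m) (weight δ) γ (koszulMatrix f *ᵥ a) =
      koszulMatrix f *ᵥ freeComponent (wt n m) (weight δ) γ a :=
  freeComponent_mulVec (fun S T => koszulMatrix_mem_of_mem (𝒜 := grad k n m) hf S T) γ a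

theorem indicator_eq_self_of_mem_koszulStrand (ha : a ∈ koszulStrand k n m δ γ p) :
    {T | (T.card : ZMod 2) = p}.indicator a = a :=
  Set.indicator_eq_self.2 fun T hT => not_imp_comm.1 ((mem_koszulStrand.1 ha).2 T) hT

theorem freeComponent_eq_self_of_mem_koszulStrand (ha : a ∈ koszulStrand k n m δ γ p) :
    freeComponent (wt n m) (weight δ) γ a = a :=
  freeComponent_eq_self (mem_koszulStrand.1 ha).1

theorem indicator_freeComponent_mem_koszulStrand (δ : Fin r → ℤ × ℤ) (γ : ℤ × ℤ) (p : ZMod 2)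
    (a : KoszulIndex r → PolyS k n m) :
    {T | (T.card : ZMod 2) = p}.indicator (freeComponent (wt n m) (weight δ) γ a) ∈
      koszulStrand k n m δ γ p := by
  refine mem_koszulStrand.2 ⟨fun T => ?_, fun T hT => Set.indicator_of_notMem (by exact hT) _⟩
  by_cases hT : (T.card : ZMod 2) = p
  · rw [Set.indicator_of_mem (by exact hT)]
    exact isWeightedHomogeneous_freeComponent (wt n m) (weight δ) γ a T
  · rw [Set.indicator_of_notMem (by exact hT)]
    exact zero_mem _

theorem koszulMatrix_mulVec_indicator_freeComponent (hf : ∀ i, f i ∈ grad k n m (δ i))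
    (γ : ℤ × ℤ) (p : ZMod 2) (a : KoszulIndex r → PolyS k n m) :
    koszulMatrix f *ᵥ {T | (T.card : ZMod 2) = p + 1}.indicator
        (freeComponent (wt n m) (weight δ) γ a) =
      {T | (T.card : ZMod 2) = p}.indicator
        (freeComponent (wt n m) (weight δ) γ (koszulMatrix f *ᵥ a)) := by
  rw [koszulMatrix_mulVec_indicator, freeComponent_koszulMatrix_mulVec hf]

theorem map_koszulDifferential_koszulStrand_le {J : Ideal (PolyS k n m)}
    (hf : ∀ i, f i ∈ grad k n m (δ i)) (hJ : Ideal.span (Set.range f) ≤ J) :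
    (koszulStrand k n m δ γ (p + 1)).map (koszulDifferential f) ≤ koszulStrand k n m δ γ p ⊓
      (LinearMap.ker (koszulDifferential f) ⊓ LinearMap.ker (koszulAugmentation r J)) := by
  rintro _ ⟨b, hb, rfl⟩
  refine ⟨?_, ?_, mem_ker_koszulAugmentation.2 ?_⟩
  · have := koszulMatrix_mulVec_indicator_freeComponent hf γ p b
    rw [freeComponent_eq_self_of_mem_koszulStrand hb,
      indicator_eq_self_of_mem_koszulStrand hb] at this
    rw [koszulDifferential_apply, this]
    exact indicator_freeComponent_mem_koszulStrand δ γ p _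
  · rw [SetLike.mem_coe, LinearMap.mem_ker, koszulDifferential_apply, koszulDifferential_apply,
      mulVec_mulVec, koszulMatrix_mul_self, zero_mulVec]
  · exact hJ (Ideal.sum_mem _ fun T _ => Ideal.mul_mem_right _ _ (koszulMatrix_empty_mem_span f T))

theorem mem_map_koszulDifferential_koszulStrand (hf : ∀ i, f i ∈ grad k n m (δ i))
    (ha : a ∈ koszulStrand k n m δ γ p) (hrange : a ∈ LinearMap.range (koszulMatrix f).mulVecLin) :
    a ∈ (koszulStrand k n m δ γ (p + 1)).map (koszulDifferential f) := by
  obtain ⟨b, hb⟩ := hrange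
  refine ⟨_, indicator_freeComponent_mem_koszulStrand δ γ (p + 1) b, ?_⟩
  rw [koszulDifferential_apply, koszulMatrix_mulVec_indicator_freeComponent hf,
    ← mulVecLin_apply, hb, freeComponent_eq_self_of_mem_koszulStrand ha,
    indicator_eq_self_of_mem_koszulStrand ha]

theorem map_koszulAugmentation_koszulStrand (f : Fin r → PolyS k n m) (δ : Fin r → ℤ × ℤ)
    (J : Ideal (PolyS k n m)) (γ : ℤ × ℤ) :
    (koszulStrand k n m δ γ 0 ⊓ LinearMap.ker (koszulDifferential f)).map
      (koszulAugmentation r J) = quotPiece k n m J γ := by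
  refine le_antisymm ?_ ?_
  · rintro _ ⟨a, ⟨ha, -⟩, rfl⟩
    refine ⟨a (empty r), ?_, rfl⟩
    simpa [weight_empty] using (mem_koszulStrand.1 ha).1 (empty r)
  · rintro _ ⟨g, hg, rfl⟩
    refine ⟨Pi.single (empty r) g, ⟨mem_koszulStrand.2 ⟨fun T => ?_, fun T hT => ?_⟩, ?_⟩, ?_⟩
    · rcases eq_or_ne T (empty r) with rfl | hT
      · simpa [weight_empty] using hg
      · simp [hT]
    · rw [Pi.single_eq_of_ne]
      rintro rfl
      exact hT (by rw [card_empty, Nat.cast_zero])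
    · rw [SetLike.mem_coe, LinearMap.mem_ker, koszulDifferential_apply, ← mul_one g, ← smul_eq_mul,
        Pi.single_smul, mulVec_smul, koszulMatrix_mulVec_single_empty, smul_zero]
    · simp [koszulAugmentation]

end KoszulStrands

section LargeDegreeExactness

open Filter KoszulIndex Matrix

variable {k : Type} [Field k] {n m : ℕ} {f : Fin (n + m) → PolyS k n m}
  {δ : Fin (n + m) → ℤ × ℤ}

theorem le_satIdeal_Birr (I : Ideal (PolyS k n m)) : I ≤ satIdeal I (Birr k n m) :=
  fun a ha => mem_satIdeal_Birr_iff.2 fun _ _ => ⟨0, by rwa [pow_zero, one_mul]⟩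

theorem eventually_mem_range_koszulMatrix (hf : ∀ i, f i ∈ grad k n m (δ i))
    (hdim : ringKrullDim (PolyS k n m ⧸ satIdeal (Ideal.span (Set.range f)) (Birr k n m)) ≤ 2) :
    ∀ᶠ γ in atTop, ∀ a : KoszulIndex (n + m) → PolyS k n m, koszulMatrix f *ᵥ a = 0 →
      a (empty (n + m)) ∈ satIdeal (Ideal.span (Set.range f)) (Birr k n m) →
      (∀ T, a T ∈ grad k n m (γ - weight δ T)) →
      a ∈ LinearMap.range (koszulMatrix f).mulVecLin := by
  have hlarge := eventually_mem_of_chartMonomial_pow_smul_mem (v := weight δ)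
    (W := LinearMap.ker (koszulMatrix f).mulVecLin ⊓
      Submodule.comap (LinearMap.proj (R := PolyS k n m) (φ := fun _ => PolyS k n m)
        (empty (n + m))) (satIdeal (Ideal.span (Set.range f)) (Birr k n m)))
    (W' := LinearMap.range (koszulMatrix f).mulVecLin) ?_ ?_
  · filter_upwards [hlarge] with γ hγ a ha hempty using hγ a ⟨ha, hempty⟩
  · rintro a ⟨ha, hempty⟩ γ
    refine ⟨?_, weightedHomogeneousComponent_mem_satIdeal
      (fun b hb γ => weightedHomogeneousComponent_mem_span_range hf hb γ) (a (empty _)) hempty _⟩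
    rw [SetLike.mem_coe, LinearMap.mem_ker, mulVecLin_apply,
      ← freeComponent_koszulMatrix_mulVec hf, show koszulMatrix f *ᵥ a = 0 from ha, map_zero]
  · rintro a ⟨ha, hempty⟩ i j
    obtain ⟨N, hN⟩ := mem_satIdeal_Birr_iff.1 hempty i j
    obtain ⟨N', b, hb⟩ :=
      (koszulExactFrom_chartMonomial hf hdim i j).exists_pow_smul_eq_mulVec ha hN
    exact ⟨N', b, hb.symm⟩

theorem eventually_map_koszulStrand_eq (hf : ∀ i, f i ∈ grad k n m (δ i))
    (hdim : ringKrullDim (PolyS k n m ⧸ satIdeal (Ideal.span (Set.range f)) (Birr k n m)) ≤ 2) :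
    ∀ᶠ γ in atTop, ∀ p, (koszulStrand k n m δ γ (p + 1)).map (koszulDifferential f) =
      koszulStrand k n m δ γ p ⊓ (LinearMap.ker (koszulDifferential f) ⊓ LinearMap.ker
        (koszulAugmentation (n + m) (satIdeal (Ideal.span (Set.range f)) (Birr k n m)))) := by
  filter_upwards [eventually_mem_range_koszulMatrix hf hdim] with γ hγ p
  refine le_antisymm (map_koszulDifferential_koszulStrand_le hf (le_satIdeal_Birr _)) ?_
  rintro a ⟨ha, hker, hempty⟩
  exact mem_map_koszulDifferential_koszulStrand hf ha
    (hγ a hker (mem_ker_koszulAugmentation.1 hempty) (mem_koszulStrand.1 ha).1)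

theorem koszulStrand_one_le_ker_koszulAugmentation {r : ℕ} (δ : Fin r → ℤ × ℤ) (γ : ℤ × ℤ)
    (J : Ideal (PolyS k n m)) :
    koszulStrand k n m δ γ 1 ≤ LinearMap.ker (koszulAugmentation r J) := fun a ha => by
  rw [mem_ker_koszulAugmentation, (mem_koszulStrand.1 ha).2 (empty r) (by simp [card_empty])]
  exact zero_mem J

theorem eventually_HFV_eq_sum (hf : ∀ i, f i ∈ grad k n m (δ i))
    (hdim : ringKrullDim (PolyS k n m ⧸ satIdeal (Ideal.span (Set.range f)) (Birr k n m)) ≤ 2) :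
    ∀ᶠ γ in atTop, (HFV k n m (Ideal.span (Set.range f)) γ : ℤ) =
      ∑ T : KoszulIndex (n + m),
        (-1) ^ T.card * (Module.finrank k (grad k n m (γ - weight δ T)) : ℤ) := by
  filter_upwards [eventually_map_koszulStrand_eq hf hdim] with γ hγ
  have heuler := finrank_eq_finrank_map_add_of_map_eq (V₀ := koszulStrand k n m δ γ 0) (hγ 1) (hγ 0)
    (koszulStrand_one_le_ker_koszulAugmentation δ γ _)
  rw [map_koszulAugmentation_koszulStrand] at heuler
  rw [← finrank_koszulStrand_sub, HFV, HFq, eq_sub_iff_add_eq]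
  exact_mod_cast heuler.symm

end LargeDegreeExactness

section DifferenceOperators

open AddMonoidAlgebra

variable {A : Type*} [AddCommGroup A]

/-- The operators `G ↦ G (· - u)` on functions `A → ℤ`. They turn a twist of a graded module into
an operation on its Hilbert function. -/
def translation (A : Type*) [AddCommGroup A] : Multiplicative A →* Module.End ℤ (A → ℤ) where
  toFun u := LinearMap.funLeft ℤ ℤ fun γ => γ - u.toAdd
  map_one' := LinearMap.ext fun G => funext fun γ => congrArg G (sub_zero γ)
  map_mul' _ _ := LinearMap.ext fun G => funext fun γ => congrArg G (sub_sub γ _ _).symm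

/-- The action of the group ring `ℤ[A]` on functions `A → ℤ` through translations. -/
def translationAction (A : Type*) [AddCommGroup A] :
    AddMonoidAlgebra ℤ A →ₐ[ℤ] Module.End ℤ (A → ℤ) :=
  AddMonoidAlgebra.lift ℤ _ A (translation A)

theorem translationAction_of (u : Multiplicative A) (G : A → ℤ) (γ : A) :
    translationAction A (of ℤ A u) G γ = G (γ - u.toAdd) := by
  rw [translationAction, lift_of]
  rfl

theorem translationAction_const (w : AddMonoidAlgebra ℤ A) (c : ℤ) :
    translationAction A w (fun _ => c) = fun _ => AddMonoidAlgebra.lift ℤ ℤ A 1 w * c := by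
  induction w using AddMonoidAlgebra.induction_on with
  | of u => ext γ; rw [translationAction_of, lift_of, MonoidHom.one_apply, one_mul]
  | add v w hv hw => ext γ; simp [hv, hw, add_mul]
  | smul r w hw => ext γ; simp [hw, mul_assoc]

theorem sum_neg_one_pow_card_mul_sub_weight {r : ℕ} (δ : Fin r → A) (G : A → ℤ) (γ : A) :
    ∑ T : KoszulIndex r, (-1) ^ T.card * G (γ - T.weight δ) =
      translationAction A (∏ i, (1 - of ℤ A (.ofAdd (δ i)))) G γ := by
  rw [← KoszulIndex.sum_neg_one_pow_card_mul, map_sum, LinearMap.sum_apply, Finset.sum_apply]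
  refine Finset.sum_congr rfl fun T _ => ?_
  have hsign : ((-1) ^ T.card : AddMonoidAlgebra ℤ A) = algebraMap ℤ _ ((-1) ^ T.card) := by simp
  rw [hsign, ← Algebra.smul_def, map_smul, LinearMap.smul_apply, Pi.smul_apply,
    translationAction_of, smul_eq_mul, toAdd_ofAdd]

end DifferenceOperators

section HilbertPolynomials

open AddMonoidAlgebra

/-- The Hilbert polynomial of a polynomial ring in `p` variables. Its difference function is the
Hilbert polynomial in `p - 1` variables, down to `0` for `p = 0`. -/
def polynomialRingHilbert : ℕ → ℤ → ℤ
  | 0, _ => 0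
  | p + 1, t => Ring.choose (t + p) p

theorem polynomialRingHilbert_sub (p : ℕ) (t : ℤ) :
    polynomialRingHilbert p t - polynomialRingHilbert p (t - 1) =
      polynomialRingHilbert (p - 1) t := by
  match p with
  | 0 => simp [polynomialRingHilbert]
  | 1 => simp [polynomialRingHilbert]
  | p + 2 =>
    have hpascal := Ring.choose_succ_succ (t + p) p
    simp only [polynomialRingHilbert, Nat.reduceSubDiff]
    rw [show t + (p + 1 : ℕ) = t + p + 1 by push_cast; ring,
      show t - 1 + (p + 1 : ℕ) = t + p by push_cast; ring, hpascal, add_sub_cancel_right]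

/-- The bigraded Hilbert polynomial of a polynomial ring in `p` variables of degree `(1, 0)` and `q`
variables of degree `(0, 1)`. -/
def bigradedHilbert (p q : ℕ) (γ : ℤ × ℤ) : ℤ :=
  polynomialRingHilbert p γ.1 * polynomialRingHilbert q γ.2

theorem bigradedHilbert_one_one : bigradedHilbert 1 1 = fun _ => 1 := by
  ext γ
  simp [bigradedHilbert, polynomialRingHilbert]

theorem bigradedHilbert_eq_zero {p q : ℕ} (h : p = 0 ∨ q = 0) : bigradedHilbert p q = 0 := by
  ext γ
  rcases h with rfl | rfl <;> simp [bigradedHilbert, polynomialRingHilbert]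

theorem finrank_grad_eq_bigradedHilbert (k : Type) [Field k] {n m : ℕ} {γ : ℤ × ℤ} (hγ : 0 ≤ γ) :
    (Module.finrank k (grad k n m γ) : ℤ) = bigradedHilbert (n + 1) (m + 1) γ := by
  obtain ⟨a, b⟩ := γ
  lift a to ℕ using hγ.1
  lift b to ℕ using hγ.2
  simp only [finrank_grad, bigradedHilbert, polynomialRingHilbert, ← Nat.cast_add,
    Ring.choose_natCast, Nat.cast_mul]

/-- The class of a shift by bidegree `u` in the group ring `ℤ[ℤ × ℤ]`, acting on bigraded Hilbert
functions. -/
abbrev shift (u : ℤ × ℤ) : AddMonoidAlgebra ℤ (ℤ × ℤ) :=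
  of ℤ (ℤ × ℤ) (.ofAdd u)

theorem shift_natCast (a b : ℕ) : shift (a, b) = shift (1, 0) ^ a * shift (0, 1) ^ b := by
  simp [shift, single_pow, single_mul_single]

theorem translationAction_one_sub_shift_fst (p q : ℕ) :
    translationAction _ (1 - shift (1, 0)) (bigradedHilbert p q) = bigradedHilbert (p - 1) q := by
  ext γ
  rw [map_sub, map_one, LinearMap.sub_apply, Module.End.one_apply, Pi.sub_apply,
    translationAction_of]
  simp [bigradedHilbert, ← polynomialRingHilbert_sub p, sub_mul]

theorem translationAction_one_sub_shift_snd (p q : ℕ) :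
    translationAction _ (1 - shift (0, 1)) (bigradedHilbert p q) = bigradedHilbert p (q - 1) := by
  ext γ
  rw [map_sub, map_one, LinearMap.sub_apply, Module.End.one_apply, Pi.sub_apply,
    translationAction_of]
  simp [bigradedHilbert, ← polynomialRingHilbert_sub q, mul_sub]

theorem translationAction_one_sub_shift_pow (p q i j : ℕ) :
    translationAction _ ((1 - shift (1, 0)) ^ i * (1 - shift (0, 1)) ^ j) (bigradedHilbert p q) =
      bigradedHilbert (p - i) (q - j) := by
  rw [map_mul, map_pow, map_pow, Module.End.mul_apply]
  have hsnd : ((translationAction _ (1 - shift (0, 1))) ^ j) (bigradedHilbert p q) =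
      bigradedHilbert p (q - j) := by
    induction j with
    | zero => rfl
    | succ j ih =>
      rw [pow_succ', Module.End.mul_apply, ih, translationAction_one_sub_shift_snd, Nat.sub_sub]
  rw [hsnd]
  induction i with
  | zero => rfl
  | succ i ih =>
    rw [pow_succ', Module.End.mul_apply, ih, translationAction_one_sub_shift_fst, Nat.sub_sub]

theorem one_sub_pow_mul_pow {R : Type*} [CommRing R] (x y : R) (a b : ℕ) :
    1 - x ^ a * y ^ b = (1 - x) * ∑ i ∈ Finset.range a, x ^ i +
      (1 - y) * (x ^ a * ∑ j ∈ Finset.range b, y ^ j) := by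
  rw [mul_left_comm, mul_neg_geom_sum, mul_neg_geom_sum]
  ring

theorem translationAction_prod_one_sub_shift {n m : ℕ} (d e : Fin (n + m) → ℕ) :
    translationAction _ (∏ i, (1 - shift (d i, e i))) (bigradedHilbert (n + 1) (m + 1)) =
      fun _ => ((∑ T ∈ Finset.powersetCard n (Finset.univ : Finset (Fin (n + m))),
        (∏ i ∈ T, d i) * ∏ i ∈ Finset.univ \ T, e i : ℕ) : ℤ) := by
  simp_rw [shift_natCast, one_sub_pow_mul_pow]
  rw [Finset.prod_add, map_sum, LinearMap.sum_apply, Finset.powersetCard_eq_filter,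
    Finset.sum_filter]
  ext γ
  push_cast
  rw [Finset.sum_apply]
  refine Finset.sum_congr rfl fun T _ => ?_
  have hcard : T.card + (Finset.univ \ T).card = n + m := by
    rw [add_comm, Finset.card_sdiff_add_card_eq_card (Finset.subset_univ T), Finset.card_fin]
  rw [Finset.prod_mul_distrib, Finset.prod_mul_distrib, Finset.prod_const, Finset.prod_const,
    mul_mul_mul_comm, mul_comm, map_mul, Module.End.mul_apply, translationAction_one_sub_shift_pow]
  split_ifs with h
  · rw [show n + 1 - T.card = 1 by omega, show m + 1 - (Finset.univ \ T).card = 1 by omega,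
      bigradedHilbert_one_one, translationAction_const]
    simp [map_prod, Finset.prod_mul_distrib]
  · rw [bigradedHilbert_eq_zero (by omega), map_zero, Pi.zero_apply]

theorem eventually_sum_neg_one_pow_card_mul_finrank_grad (k : Type) [Field k] {n m r : ℕ}
    (δ : Fin r → ℤ × ℤ) : ∀ᶠ γ in Filter.atTop,
      ∑ T : KoszulIndex r, (-1) ^ T.card * (Module.finrank k (grad k n m (γ - T.weight δ)) : ℤ) =
        translationAction _ (∏ i, (1 - shift (δ i))) (bigradedHilbert (n + 1) (m + 1)) γ := by
  filter_upwards [Filter.eventually_all.2 fun T : KoszulIndex r =>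
    Filter.eventually_ge_atTop (T.weight δ)] with γ hγ
  rw [← sum_neg_one_pow_card_mul_sub_weight]
  refine Finset.sum_congr rfl fun T _ => ?_
  rw [finrank_grad_eq_bigradedHilbert k (sub_nonneg.2 (hγ T))]

end HilbertPolynomials

section DegreeFormula

open Filter

theorem eventually_HFV_eq_sum_powersetCard {k : Type} [Field k] {n m : ℕ}
    {d e : Fin (n + m) → ℕ} {f : Fin (n + m) → PolyS k n m}
    (hf : ∀ i, f i ∈ grad k n m (d i, e i))
    (hdim : ringKrullDim (PolyS k n m ⧸ satIdeal (Ideal.span (Set.range f)) (Birr k n m)) ≤ 2) :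
    ∀ᶠ γ in atTop, HFV k n m (Ideal.span (Set.range f)) γ =
      ∑ T ∈ Finset.powersetCard n (Finset.univ : Finset (Fin (n + m))),
        (∏ i ∈ T, d i) * ∏ i ∈ Finset.univ \ T, e i := by
  filter_upwards [eventually_HFV_eq_sum hf hdim,
    eventually_sum_neg_one_pow_card_mul_finrank_grad k (n := n) (m := m)
      fun i => ((d i, e i) : ℤ × ℤ)] with γ hkoszul hnumerical
  rw [hnumerical, translationAction_prod_one_sub_shift] at hkoszul
  exact Nat.cast_injective (R := ℤ) hkoszul

theorem ringKrullDim_le_two_of_codimEq {k : Type} [Field k] {n m : ℕ} {I : Ideal (PolyS k n m)}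
    (h : CodimEq k n m I (n + m)) :
    ringKrullDim (PolyS k n m ⧸ satIdeal I (Birr k n m)) ≤ 2 := by
  rw [h, Nat.add_sub_cancel_left]
  rfl

theorem exists_nat_forall_of_eventually_atTop {p : ℤ × ℤ → Prop} (h : ∀ᶠ γ in atTop, p γ) :
    ∃ N : ℕ, ∀ γ : ℤ × ℤ, (N : ℤ) ≤ γ.1 → (N : ℤ) ≤ γ.2 → p γ := by
  obtain ⟨γ₀, hγ₀⟩ := eventually_atTop.1 h
  refine ⟨(max γ₀.1 γ₀.2).toNat, fun γ h₁ h₂ => hγ₀ γ ⟨?_, ?_⟩⟩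
  · exact (le_max_left _ _).trans ((Int.self_le_toNat _).trans h₁)
  · exact (le_max_right _ _).trans ((Int.self_le_toNat _).trans h₂)

theorem sum_powersetCard_prod_const_mul_prod_const {ι R : Type*} [Fintype ι] [DecidableEq ι]
    [CommSemiring R] (n : ℕ) (a b : R) :
    ∑ T ∈ Finset.powersetCard n (Finset.univ : Finset ι),
        (∏ _i ∈ T, a) * ∏ _i ∈ Finset.univ \ T, b =
      (Fintype.card ι).choose n * a ^ n * b ^ (Fintype.card ι - n) := by
  simp_rw [Finset.prod_const, Finset.card_univ_sdiff]
  rw [Finset.sum_powersetCard n Finset.univ fun c => a ^ c * b ^ (Fintype.card ι - c),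
    Finset.card_univ, nsmul_eq_mul, mul_assoc]

end DegreeFormula

theorem stmt2 (k : Type) [Field k] (n m : ℕ) (d e : Fin (n + m) → ℕ)
    (f : Fin (n + m) → PolyS k n m)
    (hf : ∀ i, f i ∈ grad k n m ((d i : ℤ), (e i : ℤ)))
    (I : Ideal (PolyS k n m)) (hI : I = Ideal.span (Set.range f))
    (hci : CodimEq k n m I (n + m)) :
    (∃ N : ℕ, ∀ γ : ℤ × ℤ, (N : ℤ) ≤ γ.1 → (N : ℤ) ≤ γ.2 →
      HFV k n m I γ =
        ∑ T ∈ Finset.powersetCard n (Finset.univ : Finset (Fin (n + m))),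
          (∏ i ∈ T, d i) * ∏ i ∈ Finset.univ \ T, e i) ∧
    (∀ d0 e0 : ℕ, (∀ i, d i = d0) → (∀ i, e i = e0) →
      (∑ T ∈ Finset.powersetCard n (Finset.univ : Finset (Fin (n + m))),
          (∏ i ∈ T, d i) * ∏ i ∈ Finset.univ \ T, e i) =
        Nat.choose (n + m) n * d0 ^ n * e0 ^ m) := by
  subst hI
  refine ⟨exists_nat_forall_of_eventually_atTop
    (eventually_HFV_eq_sum_powersetCard hf (ringKrullDim_le_two_of_codimEq hci)), ?_⟩
  intro d0 e0 hd he
  simp_rw [hd, he, sum_powersetCard_prod_const_mul_prod_const]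
  simp
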